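/- Let p(x) be a co-NSOP_1 partial type over M, let φ(x,y) ∈ L(M), and let c be a tuple of realizations of p such that φ(x,c) Kim-divides over M. Then there is a bound, depending only on φ(x,y) and tp(c/M), on the length n of any sequence c₀,…,c_n with each c_i ⊨ tp(c/M) for which there exist global M-finitely satisfiable types p₀,…,p_n with c_i ⊨ p_i(x)|_{M c₀…c_{i-1}} for each 0 ≤ i ≤ n and {φ(x,c_i) : 0 ≤ i ≤ n} consistent. -/

import Mathlib

namespace NSOP3Paper

open FirstOrder Language

universe u v w w' w₂ x y z

/-- Consistency (equivalently, by compactness over the monster model, finite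
satisfiability) of a family of conditions on tuples. -/
def FamConsistent {ι : Type*} {X : Type*} (C : ι → X → Prop) : Prop :=
  ∀ s : Finset ι, ∃ xx : X, ∀ i ∈ s, C i xx

/-- `k`-inconsistency of a family of conditions: any `k` of them (with pairwise
distinct indices) are jointly unsatisfiable. -/
def FamKInconsistent {ι : Type*} {X : Type*} (k : ℕ) (C : ι → X → Prop) : Prop :=
  ∀ s : Finset ι, s.card = k → ¬∃ xx : X, ∀ i ∈ s, C i xx

/-- Flattening of a family of tuples into a single tuple. -/
def flat {𝕄 : Type w} {ι : Type*} {β : Type*} (a : ι → β → 𝕄) : ι × β → 𝕄 :=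
  fun q => a q.1 q.2

/-- A first-order `L`-formula in free variables `α`, together with a tuple of
parameters from `𝕄`; this represents an instance `φ(x̄, b̄)`. -/
structure ParamFormula (L : FirstOrder.Language.{u, v}) (𝕄 : Type w) [L.Structure 𝕄]
    (α : Type w') where
  Params : Type
  toFormula : L.Formula (α ⊕ Params)
  params : Params → 𝕄

namespace ParamFormula

variable {L : FirstOrder.Language.{u, v}} {𝕄 : Type w} [L.Structure 𝕄] {α : Type w'}

/-- Realization of `φ(x̄, b̄)` at a tuple from `𝕄`. -/
def Realize (φ : ParamFormula L 𝕄 α) (xx : α → 𝕄) : Prop :=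
  φ.toFormula.Realize (Sum.elim xx φ.params)

/-- All parameters of `φ` lie in `A`; i.e. `φ ∈ L(A)`. -/
def ParamsIn (φ : ParamFormula L 𝕄 α) (A : Set 𝕄) : Prop :=
  ∀ i, φ.params i ∈ A

/-- Negation of a formula with parameters. -/
protected def not (φ : ParamFormula L 𝕄 α) : ParamFormula L 𝕄 α :=
  ⟨φ.Params, BoundedFormula.not φ.toFormula, φ.params⟩

/-- Substitute a tuple of elements of `𝕄` for the second group of free variables,
obtaining the instance `φ(x̄, c̄)` as a formula with parameters. -/
def subst {γ : Type} (φ : ParamFormula L 𝕄 (α ⊕ γ)) (c : γ → 𝕄) : ParamFormula L 𝕄 α :=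
  ⟨γ ⊕ φ.Params,
    (φ.toFormula).relabel (Sum.elim (Sum.map id Sum.inl) (Sum.inr ∘ Sum.inr)),
    Sum.elim c φ.params⟩

end ParamFormula

section TypesDefs

variable (L : FirstOrder.Language.{u, v}) (𝕄 : Type w) [L.Structure 𝕄]

/-- Two tuples have the same type over the parameter set `A` (written `b ≡_A b'`). -/
def TpEq (A : Set 𝕄) {β : Type w'} (b b' : β → 𝕄) : Prop :=
  ∀ φ : ParamFormula L 𝕄 β, φ.ParamsIn A → (φ.Realize b ↔ φ.Realize b')

/-- A complete global type in variables `α`: a complete, consistent set of formulas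
with parameters from the monster model `𝕄`. -/
structure GlobalType (α : Type w') where
  Mem : ParamFormula L 𝕄 α → Prop
  consistent : ∀ S : Finset (ParamFormula L 𝕄 α), (∀ φ ∈ S, Mem φ) →
    ∃ xx : α → 𝕄, ∀ φ ∈ S, φ.Realize xx
  complete : ∀ φ : ParamFormula L 𝕄 α, Mem φ ∨ Mem φ.not

/-- A sequence of tuples is indiscernible over the parameter set `A`: any two finite
increasing subtuples of the same length have the same type over `A`. -/
def IndiscernibleOver (A : Set 𝕄) {β : Type w'} (b : ℕ → β → 𝕄) : Prop :=
  ∀ (n : ℕ) (f g : Fin n → ℕ), StrictMono f → StrictMono g →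
    TpEq L 𝕄 A (fun q : Fin n × β => b (f q.1) q.2) (fun q : Fin n × β => b (g q.1) q.2)

end TypesDefs

namespace GlobalType

variable {L : FirstOrder.Language.{u, v}} {𝕄 : Type w} [L.Structure 𝕄] {α : Type w'}

/-- A global type is invariant over `A` if membership of `φ(x̄, b̄)` depends only on
the type of `b̄` over `A`. -/
def InvariantOver (p : GlobalType L 𝕄 α) (A : Set 𝕄) : Prop :=
  ∀ (P : Type) (ψ : L.Formula (α ⊕ P)) (b b' : P → 𝕄),
    TpEq L 𝕄 A b b' → (p.Mem ⟨P, ψ, b⟩ ↔ p.Mem ⟨P, ψ, b'⟩)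

/-- A global type is finitely satisfiable in `A` if each of its formulas is satisfied
by a tuple from `A`. -/
def FinSatIn (p : GlobalType L 𝕄 α) (A : Set 𝕄) : Prop :=
  ∀ φ : ParamFormula L 𝕄 α, p.Mem φ → ∃ xx : α → 𝕄, (∀ i, xx i ∈ A) ∧ φ.Realize xx

/-- `a ⊨ p|_B` : the tuple `a` realizes the restriction of the global type `p` to the
parameter set `B`. -/
def RealizesOver (p : GlobalType L 𝕄 α) (B : Set 𝕄) (a : α → 𝕄) : Prop :=
  ∀ φ : ParamFormula L 𝕄 α, p.Mem φ → φ.ParamsIn B → φ.Realize a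

/-- `(b i)` is a Morley sequence in `p` over `A`: each `b i ⊨ p|_{A b_{<i}}`. -/
def IsMorleyOver (p : GlobalType L 𝕄 α) (A : Set 𝕄) (b : ℕ → α → 𝕄) : Prop :=
  ∀ i : ℕ, p.RealizesOver (A ∪ ⋃ j ∈ Set.Iio i, Set.range (b j)) (b i)

end GlobalType

section MorleyDefs

variable (L : FirstOrder.Language.{u, v}) (𝕄 : Type w) [L.Structure 𝕄]

/-- `(b i)` is an invariant Morley sequence over `A`: a Morley sequence in some global
type invariant over `A`. -/
def IsInvMorleyOver (A : Set 𝕄) {α : Type w'} (b : ℕ → α → 𝕄) : Prop :=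
  ∃ p : GlobalType L 𝕄 α, p.InvariantOver A ∧ p.IsMorleyOver A b

/-- `(b i)` is a coheir Morley sequence over `A`: a Morley sequence in some global
type finitely satisfiable in `A`. -/
def IsCoheirMorleyOver (A : Set 𝕄) {α : Type w'} (b : ℕ → α → 𝕄) : Prop :=
  ∃ p : GlobalType L 𝕄 α, p.FinSatIn A ∧ p.IsMorleyOver A b

end MorleyDefs

namespace ParamFormula

variable {L : FirstOrder.Language.{u, v}} {𝕄 : Type w} [L.Structure 𝕄] {α : Type w'}

/-- `φ(x̄, b̄)` Kim-divides over `A`: some invariant Morley sequence over `A` starting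
with `b̄` makes the corresponding instances inconsistent. -/
def KimDividesOver (φ : ParamFormula L 𝕄 α) (A : Set 𝕄) : Prop :=
  ∃ b : ℕ → φ.Params → 𝕄, b 0 = φ.params ∧ IsInvMorleyOver L 𝕄 A b ∧
    ¬FamConsistent fun (i : ℕ) (xx : α → 𝕄) => φ.toFormula.Realize (Sum.elim xx (b i))

/-- `φ(x̄, b̄)` Conant-divides over `A`: every invariant Morley sequence over `A`
starting with `b̄` makes the corresponding instances inconsistent. -/
def ConantDividesOver (φ : ParamFormula L 𝕄 α) (A : Set 𝕄) : Prop :=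
  ∀ b : ℕ → φ.Params → 𝕄, b 0 = φ.params → IsInvMorleyOver L 𝕄 A b →
    ¬FamConsistent fun (i : ℕ) (xx : α → 𝕄) => φ.toFormula.Realize (Sum.elim xx (b i))

/-- `φ(x̄, b̄)` divides over `A`: some `A`-indiscernible sequence starting with `b̄`
makes the corresponding instances inconsistent. -/
def DividesOver (φ : ParamFormula L 𝕄 α) (A : Set 𝕄) : Prop :=
  ∃ b : ℕ → φ.Params → 𝕄, b 0 = φ.params ∧ IndiscernibleOver L 𝕄 A b ∧
    ¬FamConsistent fun (i : ℕ) (xx : α → 𝕄) => φ.toFormula.Realize (Sum.elim xx (b i))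

/-- `φ` Kim-forks over `A`: it implies a finite disjunction of formulas Kim-dividing
over `A`. -/
def KimForksOver (φ : ParamFormula L 𝕄 α) (A : Set 𝕄) : Prop :=
  ∃ (k : ℕ) (ψ : Fin k → ParamFormula L 𝕄 α), (∀ j, (ψ j).KimDividesOver A) ∧
    ∀ xx : α → 𝕄, φ.Realize xx → ∃ j, (ψ j).Realize xx

/-- `φ` Conant-forks over `A`: it implies a finite disjunction of formulas
Conant-dividing over `A`. -/
def ConantForksOver (φ : ParamFormula L 𝕄 α) (A : Set 𝕄) : Prop :=
  ∃ (k : ℕ) (ψ : Fin k → ParamFormula L 𝕄 α), (∀ j, (ψ j).ConantDividesOver A) ∧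
    ∀ xx : α → 𝕄, φ.Realize xx → ∃ j, (ψ j).Realize xx

/-- `φ` forks over `A`: it implies a finite disjunction of formulas dividing over `A`. -/
def ForksOver (φ : ParamFormula L 𝕄 α) (A : Set 𝕄) : Prop :=
  ∃ (k : ℕ) (ψ : Fin k → ParamFormula L 𝕄 α), (∀ j, (ψ j).DividesOver A) ∧
    ∀ xx : α → 𝕄, φ.Realize xx → ∃ j, (ψ j).Realize xx

end ParamFormula

section IndDefs

variable (L : FirstOrder.Language.{u, v}) (𝕄 : Type w) [L.Structure 𝕄]

/-- `a ⫝^K_A B` : `tp(a/A ∪ B)` contains no formula Kim-forking over `A`. -/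
def IndKim (A B : Set 𝕄) {γ : Type w'} (a : γ → 𝕄) : Prop :=
  ∀ φ : ParamFormula L 𝕄 γ, φ.ParamsIn (A ∪ B) → φ.Realize a → ¬φ.KimForksOver A

/-- `a ⫝^{Kd}_A B` : `tp(a/A ∪ B)` contains no formula Kim-dividing over `A`. -/
def IndKd (A B : Set 𝕄) {γ : Type w'} (a : γ → 𝕄) : Prop :=
  ∀ φ : ParamFormula L 𝕄 γ, φ.ParamsIn (A ∪ B) → φ.Realize a → ¬φ.KimDividesOver A

/-- `a ⫝^{K*}_A B` : Conant-independence. -/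
def IndConant (A B : Set 𝕄) {γ : Type w'} (a : γ → 𝕄) : Prop :=
  ∀ φ : ParamFormula L 𝕄 γ, φ.ParamsIn (A ∪ B) → φ.Realize a → ¬φ.ConantForksOver A

/-- `a ⫝^{K*d}_A B` : Conant-dividing independence. -/
def IndConantD (A B : Set 𝕄) {γ : Type w'} (a : γ → 𝕄) : Prop :=
  ∀ φ : ParamFormula L 𝕄 γ, φ.ParamsIn (A ∪ B) → φ.Realize a → ¬φ.ConantDividesOver A

/-- `a ⫝^f_A B` : forking-independence. -/
def IndForking (A B : Set 𝕄) {γ : Type w'} (a : γ → 𝕄) : Prop :=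
  ∀ φ : ParamFormula L 𝕄 γ, φ.ParamsIn (A ∪ B) → φ.Realize a → ¬φ.ForksOver A

/-- `a ⫝^i_A B` : `tp(a/A ∪ B)` extends to a global type invariant over `A`. -/
def IndInv (A B : Set 𝕄) {γ : Type w'} (a : γ → 𝕄) : Prop :=
  ∃ p : GlobalType L 𝕄 γ, p.InvariantOver A ∧
    ∀ φ : ParamFormula L 𝕄 γ, φ.ParamsIn (A ∪ B) → φ.Realize a → p.Mem φ

/-- `a ⫝^u_A B` : `tp(a/A ∪ B)` extends to a global type finitely satisfiable in `A`. -/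
def IndFinSat (A B : Set 𝕄) {γ : Type w'} (a : γ → 𝕄) : Prop :=
  ∃ p : GlobalType L 𝕄 γ, p.FinSatIn A ∧
    ∀ φ : ParamFormula L 𝕄 γ, φ.ParamsIn (A ∪ B) → φ.Realize a → p.Mem φ

/-- `a ⫝^{K+}_A b` : there is an invariant Morley sequence over `A` starting with `b`
that is indiscernible over `A ∪ a`. -/
def IndKPlus (A : Set 𝕄) {δ : Type w'} {γ : Type w₂} (b : δ → 𝕄) (a : γ → 𝕄) : Prop :=
  ∃ bs : ℕ → δ → 𝕄, bs 0 = b ∧ IsInvMorleyOver L 𝕄 A bs ∧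
    IndiscernibleOver L 𝕄 (A ∪ Set.range a) bs

/-- `a ⫝^{K+u}_A b` : there is a coheir Morley sequence over `A` starting with `b`
that is indiscernible over `A ∪ a`. -/
def IndKPlusU (A : Set 𝕄) {δ : Type w'} {γ : Type w₂} (b : δ → 𝕄) (a : γ → 𝕄) : Prop :=
  ∃ bs : ℕ → δ → 𝕄, bs 0 = b ∧ IsCoheirMorleyOver L 𝕄 A bs ∧
    IndiscernibleOver L 𝕄 (A ∪ Set.range a) bs

/-- Conant-independence `⫝^{K*}` is symmetric (over every small model). -/
def ConantSymmetric : Prop :=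
  ∀ (M : L.ElementarySubstructure 𝕄) (γ δ : Type w) (a : γ → 𝕄) (b : δ → 𝕄),
    IndConant L 𝕄 (M : Set 𝕄) (Set.range b) a → IndConant L 𝕄 (M : Set 𝕄) (Set.range a) b

/-- Conant-dividing independence `⫝^{K*d}` is symmetric. -/
def ConantDSymmetric : Prop :=
  ∀ (M : L.ElementarySubstructure 𝕄) (γ δ : Type w) (a : γ → 𝕄) (b : δ → 𝕄),
    IndConantD L 𝕄 (M : Set 𝕄) (Set.range b) a → IndConantD L 𝕄 (M : Set 𝕄) (Set.range a) b

/-- The relation `⫝^{K+}` is symmetric. -/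
def KPlusSymmetric : Prop :=
  ∀ (M : L.ElementarySubstructure 𝕄) (γ δ : Type w) (a : γ → 𝕄) (b : δ → 𝕄),
    IndKPlus L 𝕄 (M : Set 𝕄) b a → IndKPlus L 𝕄 (M : Set 𝕄) a b

/-- Forking-independence satisfies the chain condition with respect to invariant
Morley sequences. -/
def ChainConditionF : Prop :=
  ∀ (M : L.ElementarySubstructure 𝕄) (γ δ : Type w) (a : γ → 𝕄) (bs : ℕ → δ → 𝕄),
    IsInvMorleyOver L 𝕄 (M : Set 𝕄) bs →
    IndForking L 𝕄 (M : Set 𝕄) (Set.range (bs 0)) a →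
    ∃ bs' : ℕ → δ → 𝕄,
      TpEq L 𝕄 ((M : Set 𝕄) ∪ Set.range (bs 0)) (flat bs') (flat bs) ∧
      IndiscernibleOver L 𝕄 ((M : Set 𝕄) ∪ Set.range a) bs' ∧
      IndForking L 𝕄 (M : Set 𝕄) (Set.range (flat bs')) a

/-- Kim-independence satisfies the chain condition with respect to invariant Morley
sequences. -/
def ChainConditionK : Prop :=
  ∀ (M : L.ElementarySubstructure 𝕄) (γ δ : Type w) (a : γ → 𝕄) (bs : ℕ → δ → 𝕄),
    IsInvMorleyOver L 𝕄 (M : Set 𝕄) bs →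
    IndKim L 𝕄 (M : Set 𝕄) (Set.range (bs 0)) a →
    ∃ bs' : ℕ → δ → 𝕄,
      TpEq L 𝕄 ((M : Set 𝕄) ∪ Set.range (bs 0)) (flat bs') (flat bs) ∧
      IndiscernibleOver L 𝕄 ((M : Set 𝕄) ∪ Set.range a) bs' ∧
      IndKim L 𝕄 (M : Set 𝕄) (Set.range (flat bs')) a

/-- `T` is NSOP₃: there is no definable binary relation on tuples with no 3-cycles
containing an infinite chain. -/
def IsNSOP3 : Prop :=
  ¬∃ (m : ℕ) (R : ParamFormula L 𝕄 (Fin m ⊕ Fin m)) (a : ℕ → Fin m → 𝕄),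
    (∀ i j : ℕ, i < j → R.Realize (Sum.elim (a i) (a j))) ∧
    ¬∃ x1 x2 x3 : Fin m → 𝕄,
      R.Realize (Sum.elim x1 x2) ∧ R.Realize (Sum.elim x2 x3) ∧ R.Realize (Sum.elim x3 x1)

/-- `𝕄` is a `κ`-monster: every consistent type in fewer than `κ` variables over a
parameter set of size less than `κ` is realized. -/
class IsMonster (κ : Cardinal.{w}) : Prop where
  saturated : ∀ {α : Type w} (A : Set 𝕄) (S : Set (ParamFormula L 𝕄 α)),
    Cardinal.mk α < κ → Cardinal.mk A < κ → (∀ φ ∈ S, φ.ParamsIn A) →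
    (∀ S₀ : Finset (ParamFormula L 𝕄 α), (∀ φ ∈ S₀, φ ∈ S) →
      ∃ xx : α → 𝕄, ∀ φ ∈ S₀, φ.Realize xx) →
    ∃ xx : α → 𝕄, ∀ φ ∈ S, φ.Realize xx

/-- A tuple realizes the partial type `P`. -/
def RealizesPType {nv : ℕ} (P : Set (ParamFormula L 𝕄 (Fin nv))) (a : Fin nv → 𝕄) : Prop :=
  ∀ φ ∈ P, φ.Realize a

/-- `p(x̄)` is co-NSOP₁: no `L(M)`-formula `φ(x̄, ȳ)` and tree of tuples of
realizations of `p` witness SOP₁-style consistency/inconsistency. -/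
def CoNSOP1 (M : Set 𝕄) {nv : ℕ} (P : Set (ParamFormula L 𝕄 (Fin nv))) : Prop :=
  ¬∃ (k m : ℕ) (φ : ParamFormula L 𝕄 (Fin k ⊕ (Fin m × Fin nv)))
      (b : List Bool → Fin m → Fin nv → 𝕄),
    φ.ParamsIn M ∧
    (∀ η j, RealizesPType L 𝕄 P (b η j)) ∧
    (∀ σ : ℕ → Bool, FamConsistent fun (n : ℕ) (xx : Fin k → 𝕄) =>
      (φ.subst (flat (b (List.ofFn fun i : Fin n => σ i)))).Realize xx) ∧
    (∀ η₁ η₂ : List Bool, (η₁ ++ [false]) <+: η₂ →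
      ¬∃ xx : Fin k → 𝕄, (φ.subst (flat (b η₂))).Realize xx ∧
        (φ.subst (flat (b (η₁ ++ [true])))).Realize xx)

/-- The set of realizations of the partial type `P`. -/
def PRealizations {nv : ℕ} (P : Set (ParamFormula L 𝕄 (Fin nv))) : Type w :=
  { a : Fin nv → 𝕄 // RealizesPType L 𝕄 P a }

/-- The language `L_p` associated to a partial `nv`-type: an `m`-ary relation symbol
for each `L(M)`-formula in `m` groups of `nv` variables. -/
def pLang (M : Set 𝕄) (nv : ℕ) : Language :=
  ⟨fun _ => Empty, fun m => { φ : ParamFormula L 𝕄 (Fin m × Fin nv) // φ.ParamsIn M }⟩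

/-- The structure `M_p` on the set of realizations of `p`, with relations interpreted
by the corresponding formulas in `𝕄`. -/
instance pStruct (M : Set 𝕄) {nv : ℕ} (P : Set (ParamFormula L 𝕄 (Fin nv))) :
    (pLang L 𝕄 M nv).Structure (PRealizations L 𝕄 P) where
  funMap := fun {n} f _ => f.elim
  RelMap := fun {m} R xs => R.1.Realize fun q : Fin m × Fin nv => (xs q.1).1 q.2

end IndDefs

/-- An SOP₁ pattern witnessed inside the structure `W`. -/
def SOP1PatternIn (L' : FirstOrder.Language.{x, y}) (W : Type z) [L'.Structure W] : Prop :=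
  ∃ (k n : ℕ) (φ : L'.Formula (Fin k ⊕ Fin n)) (bt : List Bool → Fin n → W),
    (∀ σ : ℕ → Bool, FamConsistent fun (i : ℕ) (xx : Fin k → W) =>
      φ.Realize (Sum.elim xx (bt (List.ofFn fun j : Fin i => σ j)))) ∧
    (∀ η₁ η₂ : List Bool, (η₁ ++ [false]) <+: η₂ →
      ¬∃ xx : Fin k → W, φ.Realize (Sum.elim xx (bt η₂)) ∧
        φ.Realize (Sum.elim xx (bt (η₁ ++ [true]))))

/-- The complete theory of `N` is NSOP₁: no SOP₁ pattern in any elementarily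
equivalent structure. -/
def IsNSOP1Th (L' : FirstOrder.Language.{x, y}) (N : Type z) [L'.Structure N] : Prop :=
  ¬∃ (W : Type (max x y z)) (S : L'.Structure W),
    L'.completeTheory N = @Language.completeTheory L' W S ∧ @SOP1PatternIn L' W S

/-- The formula `φ(x̄, ȳ)` has the tree property, witnessed in `W`. -/
def FormulaTPIn (L' : FirstOrder.Language.{x, y}) (W : Type z) [L'.Structure W]
    {k n : ℕ} (φ : L'.Formula (Fin k ⊕ Fin n)) : Prop :=
  ∃ (kk : ℕ) (bt : List ℕ → Fin n → W),
    (∀ σ : ℕ → ℕ, FamConsistent fun (i : ℕ) (xx : Fin k → W) =>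
      φ.Realize (Sum.elim xx (bt (List.ofFn fun j : Fin i => σ j)))) ∧
    (∀ η : List ℕ, FamKInconsistent kk fun (j : ℕ) (xx : Fin k → W) =>
      φ.Realize (Sum.elim xx (bt (η ++ [j]))))

/-- The formula `φ(x̄, ȳ)` has SOP₁, witnessed in `W`. -/
def FormulaSOP1In (L' : FirstOrder.Language.{x, y}) (W : Type z) [L'.Structure W]
    {k n : ℕ} (φ : L'.Formula (Fin k ⊕ Fin n)) : Prop :=
  ∃ bt : List Bool → Fin n → W,
    (∀ σ : ℕ → Bool, FamConsistent fun (i : ℕ) (xx : Fin k → W) =>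
      φ.Realize (Sum.elim xx (bt (List.ofFn fun j : Fin i => σ j)))) ∧
    (∀ η₁ η₂ : List Bool, (η₁ ++ [false]) <+: η₂ →
      ¬∃ xx : Fin k → W, φ.Realize (Sum.elim xx (bt η₂)) ∧
        φ.Realize (Sum.elim xx (bt (η₁ ++ [true]))))

/-- Longest common prefix (meet in the tree `2^{<ω}`). -/
def meet : List Bool → List Bool → List Bool
  | a :: as, b :: bs => if a = b then a :: meet as bs else []
  | _, _ => []

/-- Strict tree order (strict prefix) on `2^{<ω}`. -/
def StrictPrefix (η ν : List Bool) : Prop := η <+: ν ∧ η ≠ ν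

/-- Lexicographic order on `2^{<ω}`. -/
def LexLt (η ν : List Bool) : Prop :=
  StrictPrefix η ν ∨ ((meet η ν ++ [false]) <+: η ∧ (meet η ν ++ [true]) <+: ν)

/-- The meet `c 0 ∧ … ∧ c k`. -/
def meetInit (c : ℕ → List Bool) : ℕ → List Bool
  | 0 => c 0
  | k + 1 => meet (meetInit c k) (c (k + 1))

/-- `c 0, …, c (l-1)` is a descending comb: a lexicographically increasing antichain
whose successive meets form a strictly descending chain in the tree order. -/
def IsDescendingComb (l : ℕ) (c : ℕ → List Bool) : Prop :=
  (∀ i j, i < l → j < l → i ≠ j → ¬(c i <+: c j)) ∧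
  (∀ i j, i < j → j < l → LexLt (c i) (c j)) ∧
  (∀ k, k + 1 < l → StrictPrefix (meetInit c (k + 1)) (meetInit c k))

section DCTP

variable (L : FirstOrder.Language.{u, v}) (𝕄 : Type w) [L.Structure 𝕄]

/-- `T` has `k`-DCTP₂. -/
def HasKDCTP2 (k : ℕ) : Prop :=
  ∃ (kx ny : ℕ) (φ : ParamFormula L 𝕄 (Fin kx ⊕ Fin ny)) (b : List Bool → Fin ny → 𝕄),
    (∀ σ : ℕ → Bool, FamKInconsistent k fun (n : ℕ) (xx : Fin kx → 𝕄) =>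
      (φ.subst (b (List.ofFn fun i : Fin n => σ i))).Realize xx) ∧
    (∀ (l : ℕ) (c : ℕ → List Bool), IsDescendingComb l c →
      ∃ xx : Fin kx → 𝕄, ∀ i < l, (φ.subst (b (c i))).Realize xx)

/-- `T` is N-ω-DCTP₂: it does not have `k`-DCTP₂ for any `k`. -/
def NOmegaDCTP2 : Prop := ∀ k : ℕ, ¬HasKDCTP2 L 𝕄 k

/-- A generic triple of sets of realizations of three partial types: the three sets
begin mutually indiscernible invariant Morley sequences over `M`. -/
def GenericTriple (M : Set 𝕄) {ι₁ ι₂ ι₃ : Type w} {nv₁ nv₂ nv₃ : ℕ}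
    (A : ι₁ → Fin nv₁ → 𝕄) (B : ι₂ → Fin nv₂ → 𝕄) (C : ι₃ → Fin nv₃ → 𝕄) : Prop :=
  ∃ (IA : ℕ → ι₁ → Fin nv₁ → 𝕄) (IB : ℕ → ι₂ → Fin nv₂ → 𝕄) (IC : ℕ → ι₃ → Fin nv₃ → 𝕄),
    IA 0 = A ∧ IB 0 = B ∧ IC 0 = C ∧
    IsInvMorleyOver L 𝕄 M (fun i => flat (IA i)) ∧
    IsInvMorleyOver L 𝕄 M (fun i => flat (IB i)) ∧
    IsInvMorleyOver L 𝕄 M (fun i => flat (IC i)) ∧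
    IndiscernibleOver L 𝕄
      (M ∪ Set.range (flat fun i => flat (IB i)) ∪ Set.range (flat fun i => flat (IC i)))
      (fun i => flat (IA i)) ∧
    IndiscernibleOver L 𝕄
      (M ∪ Set.range (flat fun i => flat (IA i)) ∪ Set.range (flat fun i => flat (IC i)))
      (fun i => flat (IB i)) ∧
    IndiscernibleOver L 𝕄
      (M ∪ Set.range (flat fun i => flat (IA i)) ∪ Set.range (flat fun i => flat (IB i)))
      (fun i => flat (IC i))

end DCTP

/-- The language of hypergraph sequences: one `n`-ary relation symbol for each `n`. -/
def hgLang : FirstOrder.Language.{0, 0} := ⟨fun _ => Empty, fun _ => PUnit⟩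

section Hypergraph

variable (V : Type z) [hgLang.Structure V]

/-- The `n`-ary edge relation of a hypergraph sequence. -/
def hgRel {n : ℕ} (v : Fin n → V) : Prop :=
  @Structure.RelMap hgLang V _ n PUnit.unit v

/-- A family of vertices is a clique: every tuple of its members is an edge. -/
def IsClique {ι : Type*} (a : ι → V) : Prop :=
  ∀ (n : ℕ) (f : Fin n → ι), hgRel V fun j => a (f j)

/-- A family of vertices is a `k`-anticlique: no `k`-tuple of its members (with
pairwise distinct indices) is an edge. -/
def IsAnticlique (k : ℕ) {ι : Type*} (a : ι → V) : Prop :=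
  ∀ f : Fin k → ι, Function.Injective f → ¬hgRel V fun j => a (f j)

/-- The hypergraph sequence has MTP. -/
def HasMTP : Prop :=
  ∃ (k : ℕ) (bt : List ℕ → V),
    (∀ σ : ℕ → ℕ, IsClique V fun n : ℕ => bt (List.ofFn fun j : Fin n => σ j)) ∧
    (∀ η : List ℕ, IsAnticlique V k fun n : ℕ => bt (η ++ [n]))

/-- The hypergraph sequence has an `(ω, ω, 1)`-array. -/
def HasOmegaArray : Prop :=
  ∃ (k : ℕ) (bt : ℕ → ℕ → V),
    (∀ i : ℕ, IsClique V (bt i)) ∧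
    (∀ σ : ℕ → ℕ, IsAnticlique V k fun i : ℕ => bt i (σ i))

/-- The hypergraph sequence has MSOP₁. -/
def HasMSOP1 : Prop :=
  ∃ bt : List Bool → V,
    (∀ σ : ℕ → Bool, IsClique V fun n : ℕ => bt (List.ofFn fun j : Fin n => σ j)) ∧
    (∀ η₁ η₂ : List Bool, (η₁ ++ [false]) <+: η₂ →
      IsAnticlique V 2 ![bt η₂, bt (η₁ ++ [true])])

/-- The hypergraph sequence has ω-MDCTP₂. -/
def HasOmegaMDCTP2 : Prop :=
  ∃ (k : ℕ) (bt : List Bool → V),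
    (∀ σ : ℕ → Bool, IsAnticlique V k fun n : ℕ => bt (List.ofFn fun j : Fin n => σ j)) ∧
    (∀ (l : ℕ) (c : ℕ → List Bool), IsDescendingComb l c →
      IsClique V fun i : Fin l => bt (c i))

/-- The hypergraph sequence has the compatible order property. -/
def HasCompatibleOrderProperty : Prop :=
  ∃ c d : ℕ → V,
    (∀ m n : ℕ, m < n →
      IsClique V fun i : Fin (n + 1) => if (i : ℕ) ≤ m then d i else c i) ∧
    (∀ m n : ℕ, m < n → ¬hgRel V ![c m, d n])

end Hypergraph

section Helpers

variable {L : FirstOrder.Language.{u, v}} {𝕄 : Type w} [L.Structure 𝕄]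

/-- `D` is definable by a formula with parameters in `A`. -/
def Dfn (L : FirstOrder.Language.{u, v}) {𝕄 : Type w} [L.Structure 𝕄] (A : Set 𝕄)
    {α : Type w'} (D : (α → 𝕄) → Prop) : Prop :=
  ∃ ψ : ParamFormula L 𝕄 α, ψ.ParamsIn A ∧ ∀ x, ψ.Realize x ↔ D x

theorem ParamFormula.realize_not {α : Type w'} (ψ : ParamFormula L 𝕄 α) (x : α → 𝕄) :
    ψ.not.Realize x ↔ ¬ ψ.Realize x := by
  unfold ParamFormula.not ParamFormula.Realize
  exact Formula.realize_not

theorem ParamFormula.realize_subst {α : Type w'} {γ : Type} (ψ : ParamFormula L 𝕄 (α ⊕ γ))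
    (d : γ → 𝕄) (x : α → 𝕄) : (ψ.subst d).Realize x ↔ ψ.Realize (Sum.elim x d) := by
  unfold ParamFormula.subst ParamFormula.Realize
  rw [Formula.realize_relabel]
  apply iff_of_eq
  congr 1
  funext i
  rcases i with (i | i) | i <;> rfl

theorem ParamFormula.paramsIn_subst {α : Type w'} {γ : Type} (ψ : ParamFormula L 𝕄 (α ⊕ γ))
    (d : γ → 𝕄) {A B : Set 𝕄} (h : ψ.ParamsIn A) (hA : A ⊆ B) (hd : ∀ i, d i ∈ B) :
    (ψ.subst d).ParamsIn B := by
  intro i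
  rcases i with i | i
  · exact hd i
  · exact hA (h i)

namespace Dfn

variable {A B : Set 𝕄} {α : Type w'} {α' : Type w₂}

theorem of_formula (ψ : ParamFormula L 𝕄 α) (h : ψ.ParamsIn A) : Dfn L A ψ.Realize :=
  ⟨ψ, h, fun _ => Iff.rfl⟩

theorem congr {D D' : (α → 𝕄) → Prop} (h : Dfn L A D) (e : ∀ x, D x ↔ D' x) : Dfn L A D' := by
  obtain ⟨ψ, h1, h2⟩ := h
  exact ⟨ψ, h1, fun x => (h2 x).trans (e x)⟩

theorem mono {D : (α → 𝕄) → Prop} (h : Dfn L A D) (hAB : A ⊆ B) : Dfn L B D := by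
  obtain ⟨ψ, h1, h2⟩ := h
  exact ⟨ψ, fun i => hAB (h1 i), h2⟩

theorem not {D : (α → 𝕄) → Prop} (h : Dfn L A D) : Dfn L A (fun x => ¬ D x) := by
  obtain ⟨ψ, h1, h2⟩ := h
  exact ⟨ψ.not, h1, fun x => (ψ.realize_not x).trans (not_congr (h2 x))⟩

theorem true' : Dfn L A (fun _ : α → 𝕄 => True) :=
  ⟨⟨Empty, ⊤, Empty.elim⟩, fun i => i.elim, fun _ => by
    simp [ParamFormula.Realize]⟩

theorem and {D D' : (α → 𝕄) → Prop} (h : Dfn L A D) (h' : Dfn L A D') :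
    Dfn L A (fun x => D x ∧ D' x) := by
  obtain ⟨ψ, h1, h2⟩ := h
  obtain ⟨ψ', h1', h2'⟩ := h'
  refine ⟨⟨ψ.Params ⊕ ψ'.Params,
    (ψ.toFormula.relabel (Sum.map id Sum.inl)) ⊓ (ψ'.toFormula.relabel (Sum.map id Sum.inr)),
    Sum.elim ψ.params ψ'.params⟩, ?_, ?_⟩
  · rintro (i | i)
    · exact h1 i
    · exact h1' i
  · intro x
    beta_reduce
    rw [← h2, ← h2']
    unfold ParamFormula.Realize
    rw [Formula.realize_inf, Formula.realize_relabel, Formula.realize_relabel]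
    refine and_congr ?_ ?_
    · apply iff_of_eq
      congr 1
      funext i; rcases i with i | i <;> rfl
    · apply iff_of_eq
      congr 1
      funext i; rcases i with i | i <;> rfl

theorem finset {ι : Type*} (s : Finset ι) (D : ι → (α → 𝕄) → Prop)
    (h : ∀ i ∈ s, Dfn L A (D i)) : Dfn L A (fun x => ∀ i ∈ s, D i x) := by
  classical
  induction s using Finset.induction_on with
  | empty => exact true'.congr (by simp)
  | insert a s ha ih =>
    refine ((h a (by simp)).and (ih fun i hi => h i (by simp [hi]))).congr ?_
    intro x; simp

theorem all {ι : Type*} [Finite ι] (D : ι → (α → 𝕄) → Prop)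
    (h : ∀ i, Dfn L A (D i)) : Dfn L A (fun x => ∀ i, D i x) := by
  cases nonempty_fintype ι
  exact (finset Finset.univ D (fun i _ => h i)).congr (by simp)

theorem relabel (f : α → α') {D : (α → 𝕄) → Prop} (h : Dfn L A D) :
    Dfn L A (fun x : α' → 𝕄 => D (x ∘ f)) := by
  obtain ⟨ψ, h1, h2⟩ := h
  refine ⟨⟨ψ.Params, ψ.toFormula.relabel (Sum.map f id), ψ.params⟩, h1, ?_⟩
  intro x
  beta_reduce
  rw [← h2]
  unfold ParamFormula.Realize
  rw [Formula.realize_relabel]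
  apply iff_of_eq
  congr 1
  funext i; rcases i with i | i <;> rfl

theorem subst {γ : Type} {D : (α ⊕ γ → 𝕄) → Prop} (h : Dfn L A D) (d : γ → 𝕄)
    (hAB : A ⊆ B) (hd : ∀ i, d i ∈ B) : Dfn L B (fun x => D (Sum.elim x d)) := by
  obtain ⟨ψ, h1, h2⟩ := h
  exact ⟨ψ.subst d, ψ.paramsIn_subst d h1 hAB hd, fun x => (ψ.realize_subst d x).trans (h2 _)⟩

theorem eq_const (i : α) {a : 𝕄} (ha : a ∈ A) : Dfn L A (fun x => x i = a) := by
  refine ⟨⟨Unit, Term.equal (Term.var (Sum.inl i)) (Term.var (Sum.inr ())), fun _ => a⟩,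
    fun _ => ha, fun x => ?_⟩
  unfold ParamFormula.Realize
  rw [Formula.realize_equal]
  simp

theorem eq_var (i j : α) : Dfn L A (fun x : α → 𝕄 => x i = x j) := by
  refine ⟨⟨Empty, Term.equal (Term.var (Sum.inl i)) (Term.var (Sum.inl j)), Empty.elim⟩,
    fun i => i.elim, fun x => ?_⟩
  unfold ParamFormula.Realize
  rw [Formula.realize_equal]
  simp

theorem ex [Nonempty 𝕄] {D : (α ⊕ α' → 𝕄) → Prop} (h : Dfn L A D) :
    Dfn L A (fun x => ∃ y, D (Sum.elim x y)) := by
  classical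
  obtain ⟨ψ, h1, h2⟩ := h
  let V := (α ⊕ α') ⊕ ψ.Params
  let s : Finset V := ψ.toFormula.freeVarFinset
  let Γ := {j : α' // (Sum.inl (Sum.inr j) : V) ∈ s}
  have hΓ : Finite Γ := by
    refine Finite.of_injective (β := s) (fun j => ⟨_, j.2⟩) ?_
    intro a b hab
    exact Subtype.ext (Sum.inr.inj (Sum.inl.inj (congrArg Subtype.val hab)))
  let g : s → (α ⊕ ψ.Params) ⊕ Γ := fun t =>
    match t with
    | ⟨Sum.inl (Sum.inl i), _⟩ => Sum.inl (Sum.inl i)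
    | ⟨Sum.inl (Sum.inr j), hj⟩ => Sum.inr ⟨j, hj⟩
    | ⟨Sum.inr k, _⟩ => Sum.inl (Sum.inr k)
  let χ : L.Formula ((α ⊕ ψ.Params) ⊕ Γ) := BoundedFormula.restrictFreeVar ψ.toFormula g
  have key : ∀ (x : α → 𝕄) (y : α' → 𝕄) (w : Γ → 𝕄), (∀ j : Γ, w j = y j.1) →
      (χ.Realize (Sum.elim (Sum.elim x ψ.params) w) ↔ D (Sum.elim x y)) := by
    intro x y w hw
    rw [← h2]
    unfold ParamFormula.Realize Formula.Realize
    apply BoundedFormula.realize_restrictFreeVar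
    rintro ⟨(i | j) | k, hj⟩
    · rfl
    · exact hw ⟨j, hj⟩
    · rfl
  refine ⟨⟨ψ.Params, χ.iExs Γ, ψ.params⟩, h1, ?_⟩
  intro x
  show (χ.iExs Γ).Realize _ ↔ _
  rw [Formula.realize_iExs]
  constructor
  · rintro ⟨w, hw⟩
    let y : α' → 𝕄 := fun j => if hj : (Sum.inl (Sum.inr j) : V) ∈ s then w ⟨j, hj⟩
      else Classical.arbitrary 𝕄
    refine ⟨y, (key x y w ?_).1 hw⟩
    rintro ⟨j, hj⟩
    simp [y, hj]
  · rintro ⟨y, hy⟩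
    exact ⟨fun j => y j.1, (key x y _ (fun _ => rfl)).2 hy⟩

end Dfn

section TpEqLemmas

variable {A B : Set 𝕄} {α : Type w'} {α' : Type w₂}

theorem TpEq.dfn {b b' : α → 𝕄} (h : TpEq L 𝕄 A b b') {D : (α → 𝕄) → Prop} (hD : Dfn L A D) :
    D b ↔ D b' := by
  obtain ⟨ψ, h1, h2⟩ := hD
  rw [← h2, ← h2]
  exact h ψ h1

theorem TpEq.of_dfn {b b' : α → 𝕄} (h : ∀ D, Dfn L A D → D b → D b') : TpEq L 𝕄 A b b' := by
  intro ψ hψ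
  refine ⟨h _ (Dfn.of_formula ψ hψ), fun hb => ?_⟩
  by_contra hc
  exact h _ (Dfn.of_formula ψ hψ).not hc hb

theorem TpEq.refl (b : α → 𝕄) : TpEq L 𝕄 A b b := fun _ _ => Iff.rfl

theorem TpEq.symm {b b' : α → 𝕄} (h : TpEq L 𝕄 A b b') : TpEq L 𝕄 A b' b :=
  fun ψ hψ => (h ψ hψ).symm

theorem TpEq.trans {b b' b'' : α → 𝕄} (h : TpEq L 𝕄 A b b') (h' : TpEq L 𝕄 A b' b'') :
    TpEq L 𝕄 A b b'' :=
  fun ψ hψ => (h ψ hψ).trans (h' ψ hψ)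

theorem TpEq.comp {b b' : α → 𝕄} (h : TpEq L 𝕄 A b b') (f : α' → α) :
    TpEq L 𝕄 A (b ∘ f) (b' ∘ f) :=
  TpEq.of_dfn fun _ hD hb => (h.dfn (hD.relabel f)).1 hb

theorem TpEq.eq_of_mem {b b' : α → 𝕄} (h : TpEq L 𝕄 A b b') (i : α) (hi : b i ∈ A) :
    b' i = b i :=
  (h.dfn (D := fun x => x i = b i) (Dfn.eq_const i hi)).1 rfl

/-- adjoining parameters from `A` -/
theorem TpEq.adjoin {γ : Type} {b b' : α → 𝕄} (h : TpEq L 𝕄 A b b') (d : γ → 𝕄)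
    (hd : ∀ i, d i ∈ A) : TpEq L 𝕄 A (Sum.elim b d) (Sum.elim b' d) :=
  TpEq.of_dfn fun _ hD hb => (h.dfn (hD.subst d subset_rfl hd)).1 hb

end TpEqLemmas

section GlobalLemmas

variable {A B : Set 𝕄} {β : Type w'}

theorem GlobalType.mem_of_imp (p : GlobalType L 𝕄 β) {ψ χ : ParamFormula L 𝕄 β}
    (h : p.Mem ψ) (hi : ∀ x, ψ.Realize x → χ.Realize x) : p.Mem χ := by
  classical
  rcases p.complete χ with hc | hc
  · exact hc
  · obtain ⟨x, hx⟩ := p.consistent {ψ, χ.not} (by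
      intro φ hφ
      simp only [Finset.mem_insert, Finset.mem_singleton] at hφ
      rcases hφ with rfl | rfl <;> assumption)
    exact absurd (hi x (hx ψ (by simp))) ((χ.realize_not x).1 (hx χ.not (by simp)))

theorem GlobalType.mem_of_imp₂ (p : GlobalType L 𝕄 β) {ψ ψ' χ : ParamFormula L 𝕄 β}
    (h : p.Mem ψ) (h' : p.Mem ψ') (hi : ∀ x, ψ.Realize x → ψ'.Realize x → χ.Realize x) :
    p.Mem χ := by
  classical
  rcases p.complete χ with hc | hc
  · exact hc
  · obtain ⟨x, hx⟩ := p.consistent {ψ, ψ', χ.not} (by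
      intro φ hφ
      simp only [Finset.mem_insert, Finset.mem_singleton] at hφ
      rcases hφ with rfl | rfl | rfl <;> assumption)
    exact absurd (hi x (hx ψ (by simp)) (hx ψ' (by simp)))
      ((χ.realize_not x).1 (hx χ.not (by simp)))

theorem GlobalType.RealizesOver.mem {p : GlobalType L 𝕄 β} {a : β → 𝕄}
    (h : p.RealizesOver B a) {ψ : ParamFormula L 𝕄 β} (hψ : ψ.ParamsIn B) (ha : ψ.Realize a) :
    p.Mem ψ := by
  rcases p.complete ψ with hc | hc
  · exact hc
  · exact absurd ha ((ψ.realize_not a).1 (h ψ.not hc hψ))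

theorem GlobalType.RealizesOver.mono {p : GlobalType L 𝕄 β} {a : β → 𝕄}
    (h : p.RealizesOver B a) (hAB : A ⊆ B) : p.RealizesOver A a :=
  fun ψ hm hψ => h ψ hm fun i => hAB (hψ i)

theorem GlobalType.RealizesOver.tpEq {p : GlobalType L 𝕄 β} {a a' : β → 𝕄}
    (h : p.RealizesOver B a) (h' : p.RealizesOver B a') : TpEq L 𝕄 B a a' := by
  apply TpEq.of_dfn
  rintro D ⟨ψ, h1, h2⟩ ha
  rw [← h2] at ha ⊢
  exact h' ψ (h.mem h1 ha) h1

theorem GlobalType.FinSatIn.invariant {p : GlobalType L 𝕄 β} (h : p.FinSatIn A) :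
    p.InvariantOver A := by
  have main : ∀ (P : Type) (ψ : L.Formula (β ⊕ P)) (b b' : P → 𝕄),
      TpEq L 𝕄 A b b' → p.Mem ⟨P, ψ, b⟩ → p.Mem ⟨P, ψ, b'⟩ := by
    intro P ψ b b' hb hm
    by_contra hc
    have hc' := (p.complete ⟨P, ψ, b'⟩).resolve_left hc
    obtain ⟨χ, -, hχ⟩ := (Dfn.of_formula (A := Set.univ) (⟨P, ψ, b⟩ : ParamFormula L 𝕄 β)
      (fun _ => trivial)).and (Dfn.of_formula (A := Set.univ)
        (⟨P, ψ, b'⟩ : ParamFormula L 𝕄 β).not (fun _ => trivial))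
    have hm' : p.Mem χ := p.mem_of_imp₂ hm hc' fun x h1 h2 => (hχ x).2 ⟨h1, h2⟩
    obtain ⟨x, hx, hr⟩ := h χ hm'
    obtain ⟨h1, h2⟩ := (hχ x).1 hr
    rw [ParamFormula.realize_not] at h2
    apply h2
    -- the formula `ψ(x, y)` restricted to occurring variables has parameters in `A`
    classical
    let s := ψ.freeVarFinset
    let Q := {i : β // (Sum.inl i : β ⊕ P) ∈ s}
    let e : Q → Fin s.card := fun q => s.equivFin ⟨_, q.2⟩
    have he : Function.Injective e := by
      intro q q' hq
      have := s.equivFin.injective hq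
      exact Subtype.ext (Sum.inl.inj (congrArg Subtype.val this))
    let g : s → P ⊕ Set.range e := fun t =>
      match t with
      | ⟨Sum.inl i, hi⟩ => Sum.inr ⟨e ⟨i, hi⟩, ⟨_, rfl⟩⟩
      | ⟨Sum.inr k, _⟩ => Sum.inl k
    let par : Set.range e → 𝕄 := fun t => x (Classical.choose t.2).1
    have hpar : ∀ q : Q, par ⟨e q, ⟨_, rfl⟩⟩ = x q.1 := by
      intro q
      have : Classical.choose (⟨q, rfl⟩ : ∃ q', e q' = e q) = q :=
        he (Classical.choose_spec (⟨q, rfl⟩ : ∃ q', e q' = e q))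
      simp only [par, this]
    let F : ParamFormula L 𝕄 P := ⟨Set.range e, BoundedFormula.restrictFreeVar ψ g, par⟩
    have hF : ∀ d : P → 𝕄, F.Realize d ↔ ψ.Realize (Sum.elim x d) := by
      intro d
      unfold ParamFormula.Realize Formula.Realize
      apply BoundedFormula.realize_restrictFreeVar
      rintro ⟨i | k, hi⟩
      · exact hpar ⟨i, hi⟩
      · rfl
    exact (hF b').1 ((hb F fun i => hx _).1 ((hF b).2 h1))
  intro P ψ b b' hb
  exact ⟨main P ψ b b' hb, main P ψ b' b hb.symm⟩

theorem GlobalType.InvariantOver.tpEq {p : GlobalType L 𝕄 β} (hp : p.InvariantOver A)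
    {δ : Type} {d d' : δ → 𝕄} {a a' : β → 𝕄} (hd : TpEq L 𝕄 A d d')
    (ha : p.RealizesOver (A ∪ Set.range d) a) (ha' : p.RealizesOver (A ∪ Set.range d') a') :
    TpEq L 𝕄 A (Sum.elim a d) (Sum.elim a' d') := by
  apply TpEq.of_dfn
  rintro D ⟨ψ, h1, h2⟩ hD
  rw [← h2, ← ψ.realize_subst] at hD ⊢
  have hm := ha.mem (ψ.paramsIn_subst d h1 Set.subset_union_left
    (fun i => Or.inr ⟨i, rfl⟩)) hD
  have hm' : p.Mem (ψ.subst d') :=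
    (hp _ _ _ _ (hd.adjoin ψ.params h1)).1 hm
  exact ha' _ hm' (ψ.paramsIn_subst d' h1 Set.subset_union_left (fun i => Or.inr ⟨i, rfl⟩))

theorem GlobalType.InvariantOver.transfer {p : GlobalType L 𝕄 β} (hp : p.InvariantOver A)
    {δ : Type} {d d' : δ → 𝕄} {a a' : β → 𝕄}
    (ha : p.RealizesOver (A ∪ Set.range d) a)
    (h : TpEq L 𝕄 A (Sum.elim a d) (Sum.elim a' d')) :
    p.RealizesOver (A ∪ Set.range d') a' := by
  classical
  rintro ⟨P, ψ, b'⟩ hm hb'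
  change ∀ i : P, b' i ∈ A ∪ Set.range d' at hb'
  let J : P → Prop := fun i => b' i ∈ Set.range d'
  let nA : {i // ¬ J i} → 𝕄 := fun i => b' i.1
  have hnA : ∀ i, nA i ∈ A := fun i => (hb' i.1).resolve_right i.2
  let f : P → δ ⊕ {i // ¬ J i} := fun i =>
    if hi : J i then Sum.inl hi.choose else Sum.inr ⟨i, hi⟩
  have hf : Sum.elim d' nA ∘ f = b' := by
    funext i
    by_cases hi : J i
    · simp only [Function.comp, f, hi, dif_pos, Sum.elim_inl]
      exact hi.choose_spec
    · simp [Function.comp, f, hi, nA]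
  let b : P → 𝕄 := Sum.elim d nA ∘ f
  have hdd : TpEq L 𝕄 A d d' := h.comp (Sum.inr : δ → β ⊕ δ)
  have hbb : TpEq L 𝕄 A b b' := by
    rw [← hf]; exact (hdd.adjoin nA hnA).comp f
  have hmb : p.Mem ⟨P, ψ, b⟩ := (hp P ψ b b' hbb).2 hm
  have hra : (⟨P, ψ, b⟩ : ParamFormula L 𝕄 β).Realize a := by
    refine ha _ hmb fun i => ?_
    change Sum.elim d nA (f i) ∈ _
    rcases f i with j | j
    · exact Or.inr ⟨j, rfl⟩
    · exact Or.inl (hnA j)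
  have h3 := (h.adjoin nA hnA).comp
    (Sum.elim (Sum.inl ∘ Sum.inl) (fun i => (f i).elim (Sum.inl ∘ Sum.inr) Sum.inr) :
      β ⊕ P → (β ⊕ δ) ⊕ {i // ¬ J i})
  let F : ParamFormula L 𝕄 (β ⊕ P) := ⟨Empty, ψ.relabel Sum.inl, Empty.elim⟩
  have hF : ∀ y, F.Realize y ↔ ψ.Realize y := by
    intro y
    simp only [F, ParamFormula.Realize, Formula.realize_relabel]
    rfl
  have e1 : ∀ (a : β → 𝕄) (d : δ → 𝕄), Sum.elim (Sum.elim a d) nA ∘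
      (Sum.elim (Sum.inl ∘ Sum.inl) (fun i => (f i).elim (Sum.inl ∘ Sum.inr) Sum.inr) :
      β ⊕ P → (β ⊕ δ) ⊕ {i // ¬ J i}) = Sum.elim a (Sum.elim d nA ∘ f) := by
    intro a d
    funext t
    rcases t with t | t
    · rfl
    · simp only [Function.comp, Sum.elim_inr]
      rcases f t with j | j <;> rfl
  rw [e1, e1, hf] at h3
  have := (h3 F (fun i => i.elim)).1 ((hF _).2 hra)
  exact (hF _).1 this

/-- Change of variables. -/
def ParamFormula.lift {β' : Type w₂} (f : β → β') (ψ : ParamFormula L 𝕄 β) :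
    ParamFormula L 𝕄 β' :=
  ⟨ψ.Params, ψ.toFormula.relabel (Sum.map f id), ψ.params⟩

theorem ParamFormula.realize_lift {β' : Type w₂} (f : β → β') (ψ : ParamFormula L 𝕄 β)
    (x : β' → 𝕄) : (ψ.lift f).Realize x ↔ ψ.Realize (x ∘ f) := by
  unfold ParamFormula.lift ParamFormula.Realize
  rw [Formula.realize_relabel]
  apply iff_of_eq
  congr 1
  funext i; rcases i with i | i <;> rfl

/-- Restriction of a global type to fewer variables. -/
def GlobalType.pull {β' : Type w₂} (p : GlobalType L 𝕄 β') (f : β → β') : GlobalType L 𝕄 β where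
  Mem ψ := p.Mem (ψ.lift f)
  consistent := by
    classical
    intro S hS
    obtain ⟨x, hx⟩ := p.consistent (S.image (ParamFormula.lift f)) (by
        intro φ hφ
        obtain ⟨ψ, h1, rfl⟩ := Finset.mem_image.1 hφ
        exact hS ψ h1)
    refine ⟨x ∘ f, fun ψ hψ => ?_⟩
    exact (ψ.realize_lift f x).1 (hx _ (Finset.mem_image_of_mem _ hψ))
  complete ψ := p.complete (ψ.lift f)

theorem GlobalType.pull_invariant {β' : Type w₂} {p : GlobalType L 𝕄 β'} (f : β → β')
    (hp : p.InvariantOver A) : (p.pull f).InvariantOver A :=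
  fun P ψ b b' h => hp P _ b b' h

theorem GlobalType.pull_realizes {β' : Type w₂} {p : GlobalType L 𝕄 β'} (f : β → β')
    {a : β' → 𝕄} (hp : p.RealizesOver A a) : (p.pull f).RealizesOver A (a ∘ f) := by
  intro ψ hm hψ
  exact (ψ.realize_lift f a).1 (hp _ hm hψ)

end GlobalLemmas

section Saturation

variable {κ : Cardinal.{w}} [IsMonster L 𝕄 κ]

theorem saturation (A : Set 𝕄) (hA : Cardinal.mk A < κ) (hκ : Cardinal.aleph0 < κ)
    {α : Type} [Countable α] {ι : Type*} (D : ι → (α → 𝕄) → Prop) (hD : ∀ i, Dfn L A (D i))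
    (hfin : ∀ s : Finset ι, ∃ x, ∀ i ∈ s, D i x) : ∃ x, ∀ i, D i x := by
  classical
  have hD' : ∀ i, Dfn L A (fun x : ULift.{w} α → 𝕄 => D i (x ∘ ULift.up)) :=
    fun i => (hD i).relabel _
  choose ψ h1 h2 using hD'
  obtain ⟨x, hx⟩ := IsMonster.saturated (L := L) (κ := κ) (α := ULift.{w} α) A (Set.range ψ)
    (lt_of_le_of_lt (Cardinal.mk_le_aleph0) hκ) hA (by rintro _ ⟨i, rfl⟩; exact h1 i) (by
      intro S₀ hS
      obtain ⟨s, hs⟩ : ∃ s : Finset ι, S₀ = s.image ψ := by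
        obtain ⟨s, -, hs⟩ := Finset.subset_set_image_iff.1
          (show (S₀ : Set _) ⊆ ψ '' Set.univ by
            rw [Set.image_univ]; exact fun φ hφ => hS φ hφ)
        exact ⟨s, hs.symm⟩
      obtain ⟨x, hx⟩ := hfin s
      refine ⟨x ∘ ULift.down, ?_⟩
      intro φ hφ
      rw [hs] at hφ
      obtain ⟨i, hi, rfl⟩ := Finset.mem_image.1 hφ
      exact (h2 i _).2 (hx i hi))
  exact ⟨x ∘ ULift.up, fun i => (h2 i x).1 (hx _ ⟨i, rfl⟩)⟩

theorem small_union (hκ : Cardinal.aleph0 < κ) (A : Set 𝕄) (hA : Cardinal.mk A < κ) (B : Set 𝕄)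
    (hB : B.Countable) : Cardinal.mk ↥(A ∪ B) < κ := by
  refine lt_of_le_of_lt (Cardinal.mk_union_le A B) (Cardinal.add_lt_of_lt hκ.le hA ?_)
  exact lt_of_le_of_lt (Cardinal.le_aleph0_iff_set_countable.2 hB) hκ

theorem GlobalType.exists_realizes {β : Type} [Countable β] (p : GlobalType L 𝕄 β) (A : Set 𝕄)
    (hA : Cardinal.mk A < κ) (hκ : Cardinal.aleph0 < κ) : ∃ a, p.RealizesOver A a := by
  classical
  obtain ⟨a, ha⟩ := saturation (L := L) A hA hκ
    (ι := {ψ : ParamFormula L 𝕄 β // p.Mem ψ ∧ ψ.ParamsIn A})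
    (fun ψ => ψ.1.Realize) (fun ψ => Dfn.of_formula _ ψ.2.2) (by
      intro s
      obtain ⟨x, hx⟩ := p.consistent (s.image Subtype.val) (by
        intro φ hφ
        obtain ⟨ψ, -, rfl⟩ := Finset.mem_image.1 hφ
        exact ψ.2.1)
      exact ⟨x, fun i hi => hx _ (Finset.mem_image_of_mem _ hi)⟩)
  exact ⟨a, fun ψ h1 h2 => ha ⟨ψ, h1, h2⟩⟩

theorem TpEq.extend [Nonempty 𝕄] {α β : Type} [Countable α] [Countable β] (A : Set 𝕄)
    (hA : Cardinal.mk A < κ) (hκ : Cardinal.aleph0 < κ) {a b : α → 𝕄} (h : TpEq L 𝕄 A a b)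
    (s : β → 𝕄) : ∃ t : β → 𝕄, TpEq L 𝕄 A (Sum.elim a s) (Sum.elim b t) := by
  have hsm := small_union hκ A hA (Set.range b) (Set.countable_range b)
  obtain ⟨t, ht⟩ := saturation (L := L) (A ∪ Set.range b) hsm hκ
    (ι := {ψ : ParamFormula L 𝕄 (α ⊕ β) // ψ.ParamsIn A ∧ ψ.Realize (Sum.elim a s)})
    (fun ψ y => ψ.1.Realize (Sum.elim b y)) (by
      intro ψ
      refine (((Dfn.of_formula ψ.1 ψ.2.1).relabel
        (Sum.elim Sum.inr Sum.inl : α ⊕ β → β ⊕ α)).subst b Set.subset_union_left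
          (fun i => Set.mem_union_right _ (Set.mem_range_self i))).congr ?_
      intro y
      apply iff_of_eq
      congr 1
      funext i; rcases i with i | i <;> rfl) (by
      intro S
      have hd : Dfn L A (fun x : α → 𝕄 => ∃ y : β → 𝕄, ∀ ψ ∈ S, ψ.1.Realize (Sum.elim x y)) :=
        (Dfn.finset S (fun ψ => ψ.1.Realize) (fun ψ _ => Dfn.of_formula _ ψ.2.1)).ex
      exact (h.dfn hd).1 ⟨s, fun ψ _ => ψ.2.2⟩)
  refine ⟨t, TpEq.of_dfn ?_⟩
  rintro D ⟨ψ, h1, h2⟩ hD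
  exact (h2 _).1 (ht ⟨ψ, h1, (h2 _).2 hD⟩)

end Saturation

section Sequences

/-- The parameters `A z_{<i}`. -/
def prev {β : Type} (A : Set 𝕄) (z : ℕ → β → 𝕄) (i : ℕ) : Set 𝕄 :=
  A ∪ ⋃ j ∈ Set.Iio i, Set.range (z j)

theorem mem_prev {β : Type} {A : Set 𝕄} {z : ℕ → β → 𝕄} {i j : ℕ} (h : j < i) (t : β) :
    z j t ∈ prev A z i :=
  Or.inr (Set.mem_biUnion (show j ∈ Set.Iio i from h) ⟨t, rfl⟩)

theorem prev_subset {β : Type} {A B : Set 𝕄} {z : ℕ → β → 𝕄} {i : ℕ} (hA : A ⊆ B)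
    (h : ∀ j < i, ∀ t, z j t ∈ B) : prev A z i ⊆ B := by
  rintro y (hy | hy)
  · exact hA hy
  · simp only [Set.mem_iUnion, Set.mem_Iio] at hy
    obtain ⟨j, hj, t, rfl⟩ := hy
    exact h j hj t

theorem seq_tpEq {β : Type} {A : Set 𝕄} (ps : ℕ → GlobalType L 𝕄 β) (z z' : ℕ → β → 𝕄) (n : ℕ)
    (hinv : ∀ i < n, (ps i).InvariantOver A)
    (hz : ∀ i < n, (ps i).RealizesOver (prev A z i) (z i))
    (hz' : ∀ i < n, (ps i).RealizesOver (prev A z' i) (z' i)) :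
    TpEq L 𝕄 A (fun q : Fin n × β => z q.1 q.2) (fun q : Fin n × β => z' q.1 q.2) := by
  induction n with
  | zero =>
    have : (fun q : Fin 0 × β => z q.1 q.2) = (fun q : Fin 0 × β => z' q.1 q.2) := by
      funext q; exact q.1.elim0
    rw [this]; exact TpEq.refl _
  | succ n ih =>
    have h1 := ih (fun i hi => hinv i (by omega)) (fun i hi => hz i (by omega))
      (fun i hi => hz' i (by omega))
    have hsub : ∀ z : ℕ → β → 𝕄,
        A ∪ Set.range (fun q : Fin n × β => z q.1 q.2) ⊆ prev A z n := by
      rintro z y (hy | ⟨q, rfl⟩)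
      · exact Or.inl hy
      · exact mem_prev q.1.2 q.2
    have h2 := (hinv n (by omega)).tpEq h1 ((hz n (by omega)).mono (hsub z))
      ((hz' n (by omega)).mono (hsub z'))
    have h3 := h2.comp (fun q : Fin (n + 1) × β =>
      if h : q.1.1 < n then (Sum.inr (⟨q.1.1, h⟩, q.2) : β ⊕ Fin n × β) else Sum.inl q.2)
    convert h3 using 1
    · funext q
      by_cases h : q.1.1 < n
      · simp [h]
      · have : q.1.1 = n := by omega
        simp [this]
    · funext q
      by_cases h : q.1.1 < n
      · simp [h]
      · have : q.1.1 = n := by omega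
        simp [this]

theorem exists_seq {κ : Cardinal.{w}} [IsMonster L 𝕄 κ] {β : Type} [Countable β]
    (q : GlobalType L 𝕄 β) (B : Set 𝕄)
    (hB : Cardinal.mk B < κ) (hκ : Cardinal.aleph0 < κ) (a₀ : β → 𝕄) (l : ℕ) :
    ∃ e : ℕ → β → 𝕄, ∀ i < l, q.RealizesOver (prev B e i) (e i) := by
  induction l with
  | zero => exact ⟨fun _ => a₀, by simp⟩
  | succ l ih =>
    obtain ⟨e, he⟩ := ih
    have hc : (⋃ j ∈ Set.Iio l, Set.range (e j)).Countable :=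
      Set.Countable.biUnion (Set.to_countable _) fun j _ => Set.countable_range _
    obtain ⟨a, ha⟩ := q.exists_realizes (κ := κ) (prev B e l) (small_union hκ B hB _ hc) hκ
    refine ⟨Function.update e l a, fun i hi => ?_⟩
    have hp : ∀ i ≤ l, prev B (Function.update e l a) i = prev B e i := by
      intro i hi
      unfold prev
      congr 1
      apply Set.iUnion₂_congr
      intro j hj
      have : j ≠ l := by have : j < i := hj; omega
      rw [Function.update_of_ne this]
    rw [hp i (by omega)]
    rcases Nat.lt_succ_iff_lt_or_eq.1 hi with h | rfl
    · rw [Function.update_of_ne (by omega)]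
      exact he i h
    · rw [Function.update_self]
      exact ha

end Sequences

section Tree

theorem GlobalType.RealizesOver.of_tpEq {β : Type w'} {A : Set 𝕄} {p : GlobalType L 𝕄 β}
    {a a' : β → 𝕄} (h : p.RealizesOver A a) (h' : TpEq L 𝕄 A a a') : p.RealizesOver A a' :=
  fun ψ hm hψ => (h' ψ hψ).1 (h ψ hm hψ)

/-- Joining two trees under a new root. -/
def joinTree {β : Type} (a : β → 𝕄) (S S' : List Bool → β → 𝕄) : List Bool → β → 𝕄
  | [] => a
  | false :: ν => S ν
  | true :: ν => S' ν

theorem exists_tree {κ : Cardinal.{w}} [IsMonster L 𝕄 κ] [Nonempty 𝕄] (hκ : Cardinal.aleph0 < κ)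
    {β : Type} [Countable β] (A : Set 𝕄) (hA : Cardinal.mk A < κ)
    (q : GlobalType L 𝕄 β) (hq : q.InvariantOver A) (c : β → 𝕄) (hqc : q.RealizesOver A c)
    (n : ℕ) (ps : ℕ → GlobalType L 𝕄 β) (hps : ∀ i < n, (ps i).InvariantOver A)
    (hpc : ∀ i < n, (ps i).RealizesOver A c) (h : ℕ) (hh : h ≤ n) :
    ∃ S : List Bool → β → 𝕄, (∀ η, TpEq L 𝕄 A (S η) c) ∧
      (∀ η : List Bool, η.length < h → (ps (h - 1 - η.length)).RealizesOver
        (A ∪ Set.range (flat fun t : Bool × List Bool => S (η ++ t.1 :: t.2))) (S η)) ∧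
      (∀ η : List Bool, η.length + 1 < h → q.RealizesOver
        (A ∪ Set.range (flat fun ν : List Bool => S (η ++ false :: ν))) (S (η ++ [true]))) := by
  induction h with
  | zero => exact ⟨fun _ => c, fun _ => TpEq.refl _, by simp, by simp⟩
  | succ h ih =>
    obtain ⟨S, h1, h2, h3⟩ := ih (by omega)
    have hS : Cardinal.mk ↥(A ∪ Set.range (flat S)) < κ :=
      small_union hκ A hA _ (Set.countable_range _)
    obtain ⟨b, hb⟩ := q.exists_realizes (κ := κ) _ hS hκ
    have hbc : TpEq L 𝕄 A (S []) b :=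
      (h1 []).trans (hqc.tpEq (hb.mono Set.subset_union_left))
    obtain ⟨t, ht⟩ := hbc.extend (κ := κ) A hA hκ (flat S)
    let S' : List Bool → β → 𝕄 := fun η i => t (η, i)
    have hSS : TpEq L 𝕄 A (flat S) (flat S') := ht.comp Sum.inr
    have hb' : S' [] = b := by
      funext i
      exact ((ht.dfn (Dfn.eq_var (Sum.inr ([], i)) (Sum.inl i))).1 rfl)
    have hS2 : Cardinal.mk ↥((A ∪ Set.range (flat S)) ∪ Set.range (flat S')) < κ :=
      small_union hκ _ hS _ (Set.countable_range _)
    obtain ⟨a, ha⟩ := (ps h).exists_realizes (κ := κ) _ hS2 hκ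
    refine ⟨joinTree a S S', ?_, ?_, ?_⟩
    · rintro (_ | ⟨_ | _, η⟩)
      · exact (ha.mono (Set.subset_union_left.trans Set.subset_union_left)).tpEq
          (hpc h (by omega))
      · exact h1 η
      · exact TpEq.trans (hSS.symm.comp (fun i : β => (η, i))) (h1 η)
    · rintro (_ | ⟨_ | _, η⟩) hη
      · refine GlobalType.RealizesOver.mono ha ?_
        rintro y (hy | ⟨⟨⟨_ | _, ν⟩, i⟩, rfl⟩)
        · exact Or.inl (Or.inl hy)
        · exact Or.inl (Or.inr ⟨(ν, i), rfl⟩)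
        · exact Or.inr ⟨(ν, i), rfl⟩
      · have := h2 η (by simpa using hη)
        have e : h + 1 - 1 - (false :: η).length = h - 1 - η.length := by
          simp only [List.length_cons]; omega
        rw [e]
        exact this
      · have hlen : η.length < h := by simpa using hη
        have := h2 η hlen
        have e : h + 1 - 1 - (true :: η).length = h - 1 - η.length := by
          simp only [List.length_cons]; omega
        rw [e]
        refine (hps _ (by omega)).transfer this ?_
        convert hSS.comp (Sum.elim (fun i : β => (η, i))
          (fun s : (Bool × List Bool) × β => (η ++ s.1.1 :: s.1.2, s.2))) using 1
        · funext s; rcases s with s | s <;> rfl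
        · funext s; rcases s with s | s <;> rfl
    · rintro (_ | ⟨_ | _, η⟩) hη
      · show q.RealizesOver _ (S' [])
        rw [hb']
        refine hb.mono ?_
        rintro y (hy | ⟨⟨ν, i⟩, rfl⟩)
        · exact Or.inl hy
        · exact Or.inr ⟨(ν, i), rfl⟩
      · exact h3 η (by simpa using hη)
      · have := h3 η (by simpa using hη)
        refine hq.transfer this ?_
        convert hSS.comp (Sum.elim (fun i : β => (η ++ [true], i))
          (fun s : List Bool × β => (η ++ false :: s.1, s.2))) using 1
        · funext s; rcases s with s | s <;> rfl
        · funext s; rcases s with s | s <;> rfl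

/-- There is a sequence of `n` copies of `c` in invariant types, followed by `l` copies in `q`,
on which `Φ` is consistent. -/
def GoodSeq {β : Type} {X : Type*} (A : Set 𝕄) (Φ : X → (β → 𝕄) → Prop) (q : GlobalType L 𝕄 β)
    (c : β → 𝕄) (l n : ℕ) : Prop :=
  ∃ (ps : ℕ → GlobalType L 𝕄 β) (z : ℕ → β → 𝕄),
    (∀ i < n, (ps i).InvariantOver A) ∧ (∀ i, n ≤ i → ps i = q) ∧
    (∀ i < n + l, TpEq L 𝕄 A (z i) c) ∧
    (∀ i < n + l, (ps i).RealizesOver (prev A z i) (z i)) ∧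
    ∃ x, ∀ i < n + l, Φ x (z i)

/-- Stretching a node. -/
def stretch (r : ℕ) : List Bool → List Bool
  | [] => []
  | i :: ν => List.replicate r false ++ i :: stretch r ν

theorem stretch_append (r : ℕ) (η ν : List Bool) :
    stretch r (η ++ ν) = stretch r η ++ stretch r ν := by
  induction η with
  | nil => rfl
  | cons i η ih => simp [stretch, ih]

theorem length_stretch (r : ℕ) (η : List Bool) :
    (stretch r η).length = (r + 1) * η.length := by
  induction η with
  | nil => rfl
  | cons i η ih => simp [stretch, ih]; ring

theorem stretch_prefix (r j s : ℕ) (hj : j ≤ r) (hs : r ≤ s) (ν η : List Bool) (h : ν <+: η) :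
    (stretch r ν ++ List.replicate j false) <+: (stretch r η ++ List.replicate s false) := by
  obtain ⟨μ, rfl⟩ := h
  rw [stretch_append, List.append_assoc, List.prefix_append_right_inj]
  cases μ with
  | nil =>
    refine ⟨List.replicate (s - j) false, ?_⟩
    rw [← List.replicate_add, stretch, List.nil_append]
    congr 1; omega
  | cons i μ =>
    refine ⟨List.replicate (r - j) false ++ i :: stretch r μ ++ List.replicate s false, ?_⟩
    rw [stretch, ← List.append_assoc, ← List.append_assoc, ← List.replicate_add]
    congr 3; omega

theorem core {κ : Cardinal.{w}} [IsMonster L 𝕄 κ] [Nonempty 𝕄] (hκ : Cardinal.aleph0 < κ)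
    {β : Type} [Countable β] (A : Set 𝕄) (hA : Cardinal.mk A < κ)
    {k : ℕ} (Φ : (Fin k → 𝕄) → (β → 𝕄) → Prop)
    (hΦ : Dfn L A (fun x : Fin k ⊕ β → 𝕄 => Φ (x ∘ Sum.inl) (x ∘ Sum.inr)))
    (q : GlobalType L 𝕄 β) (hq : q.InvariantOver A) (c : β → 𝕄) (hqc : q.RealizesOver A c)
    (K : ℕ) (hK : ¬ GoodSeq A Φ q c K 0) (h0 : ∀ n, GoodSeq A Φ q c 0 n) :
    ∃ g : ℕ, ∀ N : ℕ, ∃ T : List Bool → Fin g → β → 𝕄,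
      (∀ η j, TpEq L 𝕄 A (T η j) c) ∧
      (∀ η : List Bool, η.length ≤ N → ∃ x, ∀ ν, ν <+: η → ∀ j, Φ x (T ν j)) ∧
      (∀ η₁ η₂ : List Bool, η₂.length ≤ N → (η₁ ++ [false]) <+: η₂ →
        ¬∃ x, (∀ j, Φ x (T η₂ j)) ∧ (∀ j, Φ x (T (η₁ ++ [true]) j))) := by
  classical
  have hex : ∃ l, ¬ ∀ n, GoodSeq A Φ q c l n := ⟨K, fun h => hK (h 0)⟩
  obtain ⟨l, hl, hl'⟩ : ∃ l, (∀ n, GoodSeq A Φ q c l n) ∧ ¬ ∀ n, GoodSeq A Φ q c (l + 1) n := by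
    have h1 := Nat.find_spec hex
    have h2 : Nat.find hex ≠ 0 := fun h => by rw [h] at h1; exact h1 h0
    obtain ⟨l, hl⟩ := Nat.exists_eq_succ_of_ne_zero h2
    refine ⟨l, ?_, ?_⟩
    · exact not_not.1 (Nat.find_min hex (m := l) (by omega))
    · rw [hl] at h1; exact h1
  push Not at hl'
  obtain ⟨r, hr⟩ := hl'
  refine ⟨l + (r + 1), fun N => ?_⟩
  obtain ⟨n, hn⟩ : ∃ n, n = (r + 1) * (N + 1) := ⟨_, rfl⟩
  obtain ⟨ps, z₀, hps, hpsq, hz₀c, hz₀, x₀, hx₀⟩ := hl n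
  have hinv : ∀ i, (ps i).InvariantOver A := fun i => by
    by_cases hi : i < n
    · exact hps i hi
    · rw [hpsq i (by omega)]; exact hq
  have hpc : ∀ i < n, (ps i).RealizesOver A c := fun i hi =>
    ((hz₀ i (by omega)).mono Set.subset_union_left).of_tpEq (hz₀c i (by omega))
  obtain ⟨S, hS1, hS2, hS3⟩ := exists_tree (κ := κ) hκ A hA q hq c hqc n ps hps hpc n le_rfl
  have hS : Cardinal.mk ↥(A ∪ Set.range (flat S)) < κ :=
    small_union hκ A hA _ (Set.countable_range _)
  obtain ⟨e, he⟩ := exists_seq (κ := κ) q _ hS hκ c l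
  have hAS : ∀ i, A ⊆ prev (A ∪ Set.range (flat S)) e i :=
    fun i => Set.subset_union_left.trans Set.subset_union_left
  have hSS : ∀ η t i, S η t ∈ prev (A ∪ Set.range (flat S)) e i :=
    fun η t i => Or.inl (Or.inr ⟨(η, t), rfl⟩)
  have hec : ∀ i < l, TpEq L 𝕄 A (e i) c := fun i hi => ((he i hi).mono (hAS i)).tpEq hqc
  let T : List Bool → Fin l ⊕ Fin (r + 1) → β → 𝕄 := fun η =>
    Sum.elim (fun j => e j) (fun j => S (stretch r η ++ List.replicate j false))
  -- tail lemma
  have tail : ∀ (z : ℕ → β → 𝕄) (n' : ℕ), (∀ i < n', ∃ η, z i = S η) →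
      (∀ i, z (n' + i) = e i) → ∀ i < l, q.RealizesOver (prev A z (n' + i)) (z (n' + i)) := by
    intro z n' h1 h2 i hi
    rw [h2]
    refine (he i hi).mono (prev_subset (hAS i) ?_)
    intro j hj t
    by_cases hj' : j < n'
    · obtain ⟨η, hη⟩ := h1 j hj'
      rw [hη]; exact hSS _ _ _
    · obtain ⟨j, rfl⟩ := Nat.exists_eq_add_of_le (not_lt.1 hj')
      rw [h2]
      exact mem_prev (by omega) t
  have hmul : ∀ a, a ≤ N → (r + 1) * a + r + 1 ≤ n := by
    intro a ha
    rw [hn]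
    calc (r + 1) * a + r + 1 = (r + 1) * (a + 1) := by ring
      _ ≤ _ := Nat.mul_le_mul_left _ (by omega)
  refine ⟨fun η j => T η (finSumFinEquiv.symm j), ?_, ?_, ?_⟩
  · intro η j
    beta_reduce
    rcases finSumFinEquiv.symm j with j | j
    · exact hec j j.2
    · exact hS1 _
  · intro η hη
    have hle := hmul _ hη
    have hlen := length_stretch r η
    let ρ := stretch r η ++ List.replicate (n - 1 - (stretch r η).length) false
    have hρ : ρ.length = n - 1 := by
      simp only [ρ, List.length_append, List.length_replicate]; omega
    let z : ℕ → β → 𝕄 := fun i => if i < n then S (ρ.take (n - 1 - i)) else e (i - n)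
    have hz : ∀ i < n + l, (ps i).RealizesOver (prev A z i) (z i) := by
      intro i hi
      by_cases hin : i < n
      · have hzi : z i = S (ρ.take (n - 1 - i)) := if_pos hin
        have hl1 : (ρ.take (n - 1 - i)).length = n - 1 - i := by
          rw [List.length_take, hρ]; omega
        have h2 := hS2 (ρ.take (n - 1 - i)) (by omega)
        rw [hl1, show n - 1 - (n - 1 - i) = i by omega] at h2
        rw [hzi]
        refine h2.mono (prev_subset Set.subset_union_left ?_)
        intro j hj t
        have hzj : z j = S (ρ.take (n - 1 - j)) := if_pos (by omega)
        obtain ⟨μ, hμ⟩ : ρ.take (n - 1 - i) <+: ρ.take (n - 1 - j) :=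
          List.take_prefix_take_left (by omega)
        have hl2 : (ρ.take (n - 1 - j)).length = n - 1 - j := by
          rw [List.length_take, hρ]; omega
        rcases μ with _ | ⟨d, μ⟩
        · exfalso
          rw [List.append_nil] at hμ
          rw [hμ] at hl1
          omega
        · rw [hzj, ← hμ]
          exact Or.inr ⟨((d, μ), t), rfl⟩
      · obtain ⟨j, rfl⟩ := Nat.exists_eq_add_of_le (not_lt.1 hin)
        rw [hpsq _ (by omega)]
        refine tail z n ?_ ?_ j (by omega)
        · intro i hi; exact ⟨_, if_pos hi⟩
        · intro i
          simp [z]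
    have htp := seq_tpEq ps z₀ z (n + l) (fun i _ => hinv i) hz₀ hz
    have hdef : Dfn L A (fun y : Fin (n + l) × β → 𝕄 =>
        ∃ x : Fin k → 𝕄, ∀ i : Fin (n + l), Φ x (fun t => y (i, t))) := by
      have h1 : Dfn L A (fun y : (Fin (n + l) × β) ⊕ Fin k → 𝕄 =>
          ∀ i : Fin (n + l), Φ (y ∘ Sum.inr) (fun t => y (Sum.inl (i, t)))) :=
        Dfn.all _ fun i => hΦ.relabel (Sum.elim Sum.inr (fun t => Sum.inl (i, t)))
      exact h1.ex
    obtain ⟨x, hx⟩ := (htp.dfn hdef).1 ⟨x₀, fun i => hx₀ i i.2⟩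
    refine ⟨x, fun ν hν j => ?_⟩
    beta_reduce
    rcases finSumFinEquiv.symm j with j | j
    · have := hx ⟨n + j, by omega⟩
      simpa [z, T] using this
    · have hpre := stretch_prefix r j (n - 1 - (stretch r η).length) (by omega) (by omega) ν η hν
      have h1 := List.prefix_iff_eq_take.1 hpre
      have h2 := hpre.length_le
      change _ ≤ ρ.length at h2
      rw [hρ] at h2
      set L' := (stretch r ν ++ List.replicate (j : ℕ) false).length with hL'
      have := hx ⟨n - 1 - L', by omega⟩
      have hlt : n - 1 - L' < n := by omega
      simp only [z, hlt, if_true] at this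
      rw [show n - 1 - (n - 1 - L') = L' by omega] at this
      change Φ x (S (stretch r ν ++ List.replicate (j : ℕ) false))
      rw [h1]
      exact this
  · rintro η₁ η₂ hη₂ ⟨μ, rfl⟩ ⟨x, hx1, hx2⟩
    apply hr
    have hx1' : ∀ j, Φ x (T (η₁ ++ [false] ++ μ) j) := fun j => by
      simpa using hx1 (finSumFinEquiv j)
    have hx2' : ∀ j, Φ x (T (η₁ ++ [true]) j) := fun j => by
      simpa using hx2 (finSumFinEquiv j)
    let η := stretch r η₁ ++ List.replicate r false
    let θ := stretch r (η₁ ++ [false] ++ μ)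
    have hθ : θ = η ++ false :: stretch r μ := by
      simp [θ, η, stretch_append, stretch]
    have hη : stretch r (η₁ ++ [true]) = η ++ [true] := by
      simp [η, stretch_append, stretch]
    have hle := hmul _ hη₂
    have hθl : θ.length = (r + 1) * (η₁ ++ [false] ++ μ).length := length_stretch r _
    have hηl : η.length + 1 ≤ θ.length := by rw [hθ]; simp
    let z : ℕ → β → 𝕄 := fun i => if i < r then S (θ ++ List.replicate (r - 1 - i) false)
      else if i = r then S (η ++ [true]) else e (i - (r + 1))
    have hz1 : ∀ i < r, z i = S (θ ++ List.replicate (r - 1 - i) false) := fun i hi => if_pos hi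
    have hz2 : z r = S (η ++ [true]) := by simp [z]
    have hz3 : ∀ i, z (r + 1 + i) = e i := by
      intro i
      simp only [z]
      rw [if_neg (by omega), if_neg (by omega)]
      congr 1; omega
    refine ⟨fun i => if i < r then ps (n - 1 - (θ.length + (r - 1 - i))) else q, z,
      ?_, ?_, ?_, ?_, x, ?_⟩
    · intro i hi
      beta_reduce
      rw [if_pos hi]
      exact hinv _
    · intro i hi
      exact if_neg (by omega)
    · intro i hi
      rcases lt_trichotomy i r with h | rfl | h
      · rw [hz1 i h]; exact hS1 _
      · rw [hz2]; exact hS1 _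
      · obtain ⟨j, rfl⟩ := Nat.exists_eq_add_of_le (show r + 1 ≤ i from h)
        rw [hz3]; exact hec _ (by omega)
    · intro i hi
      beta_reduce
      rcases lt_trichotomy i r with h | rfl | h
      · rw [if_pos h, hz1 i h]
        have h2 := hS2 (θ ++ List.replicate (r - 1 - i) false) (by
          rw [List.length_append, List.length_replicate]; omega)
        rw [List.length_append, List.length_replicate] at h2
        refine h2.mono (prev_subset Set.subset_union_left ?_)
        intro j hj t
        rw [hz1 j (by omega)]
        refine Or.inr ⟨((false, List.replicate (i - j - 1) false), t), ?_⟩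
        simp only [flat]
        rw [← List.replicate_succ, List.append_assoc, ← List.replicate_add]
        congr 3; omega
      · rw [if_neg (lt_irrefl _), hz2]
        refine (hS3 η (by omega)).mono (prev_subset Set.subset_union_left ?_)
        intro j hj t
        rw [hz1 j hj]
        refine Or.inr ⟨(stretch i μ ++ List.replicate (i - 1 - j) false, t), ?_⟩
        simp only [flat]
        rw [hθ, List.append_assoc η, List.cons_append]
      · rw [if_neg (by omega)]
        obtain ⟨j, rfl⟩ := Nat.exists_eq_add_of_le (show r + 1 ≤ i from h)
        refine tail z (r + 1) ?_ hz3 j (by omega)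
        intro i hi
        rcases Nat.lt_succ_iff_lt_or_eq.1 hi with h | rfl
        · exact ⟨_, hz1 i h⟩
        · exact ⟨_, hz2⟩
    · intro i hi
      rcases lt_trichotomy i r with h | rfl | h
      · rw [hz1 i h]
        exact hx1' (Sum.inr ⟨r - 1 - i, by omega⟩)
      · rw [hz2, ← hη]
        have := hx2' (Sum.inr ⟨0, by omega⟩)
        simpa [T] using this
      · obtain ⟨j, rfl⟩ := Nat.exists_eq_add_of_le (show r + 1 ≤ i from h)
        rw [hz3]
        exact hx2' (Sum.inl ⟨j, by omega⟩)

end Tree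

section Final

theorem ofFn_prefix (σ : ℕ → Bool) {n N : ℕ} (h : n ≤ N) :
    (List.ofFn fun i : Fin n => σ i) <+: (List.ofFn fun i : Fin N => σ i) := by
  rw [List.prefix_iff_eq_take]
  apply List.ext_getElem
  · simp [h]
  · intro i h1 h2
    simp

theorem final_tree {κ : Cardinal.{w}} [IsMonster L 𝕄 κ] [Nonempty 𝕄] (hκ : Cardinal.aleph0 < κ)
    (A : Set 𝕄) (hA : Cardinal.mk A < κ) {nv : ℕ} (P : Set (ParamFormula L 𝕄 (Fin nv)))
    (hP : ∀ φ ∈ P, φ.ParamsIn A) {k m : ℕ}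
    (Φ : (Fin k → 𝕄) → (Fin m × Fin nv → 𝕄) → Prop)
    (hΦ : Dfn L A (fun x : Fin k ⊕ (Fin m × Fin nv) → 𝕄 => Φ (x ∘ Sum.inl) (x ∘ Sum.inr)))
    (c : Fin m → Fin nv → 𝕄) (hc : ∀ j, RealizesPType L 𝕄 P (c j)) (g : ℕ)
    (hT : ∀ N : ℕ, ∃ T : List Bool → Fin g → Fin m × Fin nv → 𝕄,
      (∀ η j, TpEq L 𝕄 A (T η j) (flat c)) ∧
      (∀ η : List Bool, η.length ≤ N → ∃ x, ∀ ν, ν <+: η → ∀ j, Φ x (T ν j)) ∧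
      (∀ η₁ η₂ : List Bool, η₂.length ≤ N → (η₁ ++ [false]) <+: η₂ →
        ¬∃ x, (∀ j, Φ x (T η₂ j)) ∧ (∀ j, Φ x (T (η₁ ++ [true]) j)))) :
    ¬ CoNSOP1 L 𝕄 A P := by
  classical
  let Ψ : (Fin k → 𝕄) → (Fin (g * m) × Fin nv → 𝕄) → Prop := fun x y =>
    ∀ s : Fin g, Φ x (fun q => y (finProdFinEquiv (s, q.1), q.2))
  have hΨ : Dfn L A (fun x : Fin k ⊕ (Fin (g * m) × Fin nv) → 𝕄 =>
      Ψ (x ∘ Sum.inl) (x ∘ Sum.inr)) :=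
    Dfn.all _ fun s => hΦ.relabel
      (Sum.map id (fun q : Fin m × Fin nv => (finProdFinEquiv (s, q.1), q.2)))
  let V := List Bool × (Fin (g * m) × Fin nv)
  let I := (List Bool × Fin (g * m) × P) ⊕
    (List Bool ⊕ {η : List Bool × List Bool // (η.1 ++ [false]) <+: η.2})
  let D : I → (V → 𝕄) → Prop := fun i y => match i with
    | Sum.inl (η, j, ψ) => ψ.1.Realize (fun t => y (η, j, t))
    | Sum.inr (Sum.inl η) => ∃ x : Fin k → 𝕄, ∀ ν : {ν // ν ∈ η.inits}, Ψ x (fun r => y (ν.1, r))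
    | Sum.inr (Sum.inr η) => ¬ ∃ x : Fin k → 𝕄, Ψ x (fun r => y (η.1.2, r)) ∧
        Ψ x (fun r => y (η.1.1 ++ [true], r))
  have hD : ∀ i, Dfn L A (D i) := by
    rintro (⟨η, j, ψ⟩ | η | η)
    · exact (Dfn.of_formula ψ.1 (hP _ ψ.2)).relabel (fun t : Fin nv => ((η, j, t) : V))
    · have h1 : Dfn L A (fun y : V ⊕ Fin k → 𝕄 => ∀ ν : {ν // ν ∈ η.inits},
          Ψ (y ∘ Sum.inr) (fun r => y (Sum.inl (ν.1, r)))) :=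
        Dfn.all _ fun ν => hΨ.relabel (Sum.elim Sum.inr (fun r => Sum.inl ((ν.1, r) : V)))
      exact h1.ex
    · have h1 : ∀ ν : List Bool, Dfn L A (fun y : V ⊕ Fin k → 𝕄 =>
          Ψ (y ∘ Sum.inr) (fun r => y (Sum.inl (ν, r)))) :=
        fun ν => hΨ.relabel (Sum.elim Sum.inr (fun r => Sum.inl ((ν, r) : V)))
      exact ((h1 η.1.2).and (h1 (η.1.1 ++ [true]))).ex.not
  obtain ⟨y, hy⟩ := saturation (L := L) A hA hκ D hD (by
    intro s
    let len : I → ℕ := fun i => match i with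
      | Sum.inl _ => 0
      | Sum.inr (Sum.inl η) => η.length
      | Sum.inr (Sum.inr η) => η.1.2.length
    obtain ⟨T, hT1, hT2, hT3⟩ := hT (s.sup len)
    let y : V → 𝕄 := fun r =>
      T r.1 (finProdFinEquiv.symm r.2.1).1 ((finProdFinEquiv.symm r.2.1).2, r.2.2)
    have hyΨ : ∀ x η, Ψ x (fun r => y (η, r)) ↔ ∀ j, Φ x (T η j) := by
      intro x η
      simp only [Ψ, y, Equiv.symm_apply_apply, Prod.mk.eta]
    refine ⟨y, ?_⟩
    intro i hi
    have hlen : len i ≤ s.sup len := Finset.le_sup hi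
    rcases i with ⟨η, j, ψ⟩ | η | η
    · have h1 := (hT1 η (finProdFinEquiv.symm j).1).comp
        (fun t : Fin nv => ((finProdFinEquiv.symm j).2, t))
      exact (h1 ψ.1 (hP _ ψ.2)).2 (hc (finProdFinEquiv.symm j).2 ψ.1 ψ.2)
    · obtain ⟨x, hx⟩ := hT2 η hlen
      exact ⟨x, fun ν => (hyΨ x ν.1).2 (hx ν.1 ((List.mem_inits _ _).1 ν.2))⟩
    · rintro ⟨x, h1, h2⟩
      exact hT3 η.1.1 η.1.2 hlen η.2 ⟨x, (hyΨ _ _).1 h1, (hyΨ _ _).1 h2⟩)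
  obtain ⟨φ, hφ, hφΨ⟩ := hΨ
  have key : ∀ (η : List Bool) (x : Fin k → 𝕄),
      (φ.subst (flat (fun j t => y (η, j, t)))).Realize x ↔ Ψ x (fun r => y (η, r)) := by
    intro η x
    rw [φ.realize_subst, hφΨ]
    exact Iff.rfl
  intro hco
  refine hco ⟨k, g * m, φ, fun η j t => y (η, j, t), hφ, ?_, ?_, ?_⟩
  · intro η j ψ hψ
    exact hy (Sum.inl (η, j, ⟨ψ, hψ⟩))
  · intro σ s
    obtain ⟨x, hx⟩ := hy (Sum.inr (Sum.inl (List.ofFn fun i : Fin (s.sup id) => σ i)))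
    exact ⟨x, fun n hn => (key _ _).2 (hx ⟨List.ofFn fun i : Fin n => σ i,
      (List.mem_inits _ _).2 (ofFn_prefix σ (Finset.le_sup (f := id) hn))⟩)⟩
  · intro η₁ η₂ h
    rintro ⟨x, h1, h2⟩
    exact hy (Sum.inr (Sum.inr ⟨(η₁, η₂), h⟩)) ⟨x, (key _ _).1 h1, (key _ _).1 h2⟩

theorem eq_univ_of_finite (M : L.ElementarySubstructure 𝕄) (hM : (M : Set 𝕄).Finite) :
    ∀ a : 𝕄, a ∈ (M : Set 𝕄) := by
  have : Finite M := hM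
  have h1 : ¬ (M ⊨ Sentence.cardGe L (Nat.card M + 1)) := by
    rw [Sentence.realize_cardGe, ← Nat.cast_card]
    norm_cast
    omega
  rw [M.realize_sentence, Sentence.realize_cardGe, not_le] at h1
  have h2 : Cardinal.mk 𝕄 < Cardinal.aleph0 := h1.trans (Cardinal.natCast_lt_aleph0)
  have : Finite 𝕄 := Cardinal.lt_aleph0_iff_finite.1 h2
  rw [← Nat.cast_card] at h1
  norm_cast at h1
  have h3 : (M : Set 𝕄) = Set.univ := by
    apply Set.eq_of_subset_of_ncard_le (Set.subset_univ _) _ Set.finite_univ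
    rw [Set.ncard_univ, ← Nat.card_coe_set_eq]
    change Nat.card 𝕄 ≤ Nat.card M
    omega
  intro a
  rw [h3]
  trivial

end Final

end Helpers

/-- for a co-NSOP₁ type `p`, an `L(M)`-formula `φ(x,y)` and a tuple `c`
of realizations of `p` with `φ(x,c)` Kim-dividing over `M`, there is a bound on the
length of sequences of `M`-finitely-satisfiable-type-generic copies of `c` on which
`φ` is consistent. -/
theorem statement_6
    (L : FirstOrder.Language.{u, v}) (𝕄 : Type w) [L.Structure 𝕄]
    (κ : Cardinal.{w}) [IsMonster L 𝕄 κ]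
    (M : L.ElementarySubstructure 𝕄) (hMsmall : Cardinal.mk ↥(M : Set 𝕄) < κ)
    {nv : ℕ} (P : Set (ParamFormula L 𝕄 (Fin nv)))
    (hP : ∀ φ ∈ P, φ.ParamsIn (M : Set 𝕄))
    (hco : CoNSOP1 L 𝕄 (M : Set 𝕄) P)
    {k m : ℕ} (φ : ParamFormula L 𝕄 (Fin k ⊕ (Fin m × Fin nv)))
    (hφ : φ.ParamsIn (M : Set 𝕄))
    (c : Fin m → Fin nv → 𝕄) (hc : ∀ j, RealizesPType L 𝕄 P (c j))
    (hdiv : (φ.subst (flat c)).KimDividesOver (M : Set 𝕄)) :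
    ∃ N : ℕ, ∀ (n : ℕ) (cs : ℕ → Fin m → Fin nv → 𝕄)
      (ps : ℕ → GlobalType L 𝕄 (Fin m × Fin nv)),
      (∀ i ≤ n, TpEq L 𝕄 (M : Set 𝕄) (flat (cs i)) (flat c)) →
      (∀ i ≤ n, (ps i).FinSatIn (M : Set 𝕄)) →
      (∀ i ≤ n, (ps i).RealizesOver
        ((M : Set 𝕄) ∪ ⋃ j ∈ Set.Iio i, Set.range (flat (cs j))) (flat (cs i))) →
      (∃ xx : Fin k → 𝕄, ∀ i ≤ n, (φ.subst (flat (cs i))).Realize xx) →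
      n ≤ N := by
  classical
  obtain ⟨b, hb0, ⟨q₀, hq₀, hbq⟩, hincons⟩ := hdiv
  have hbM : ∀ i, TpEq L 𝕄 (M : Set 𝕄) (b 0) (b i) := fun i =>
    ((hbq 0).mono Set.subset_union_left).tpEq ((hbq i).mono Set.subset_union_left)
  -- the parameters of `φ` do not move
  have hbi : ∀ i, b i = Sum.elim (b i ∘ Sum.inl) φ.params := by
    intro i
    funext t
    rcases t with t | t
    · rfl
    · have h1 : b 0 (Sum.inr t) = φ.params t := by rw [hb0]; rfl
      have h2 := (hbM i).eq_of_mem (Sum.inr t) (by rw [h1]; exact hφ t)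
      rw [h2, h1]; rfl
  let Φ : (Fin k → 𝕄) → (Fin m × Fin nv → 𝕄) → Prop := fun x y => (φ.subst y).Realize x
  have hΦ : Dfn L (M : Set 𝕄) (fun x : Fin k ⊕ (Fin m × Fin nv) → 𝕄 =>
      Φ (x ∘ Sum.inl) (x ∘ Sum.inr)) := by
    refine (Dfn.of_formula φ hφ).congr fun x => ?_
    simp only [Φ]
    rw [φ.realize_subst, Sum.elim_comp_inl_inr]
  have hΦb : ∀ i (x : Fin k → 𝕄),
      (φ.subst (flat c)).toFormula.Realize (Sum.elim x (b i)) ↔ Φ x (b i ∘ Sum.inl) := by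
    intro i x
    rw [hbi i]
    exact Iff.rfl
  have hb0c : b 0 ∘ Sum.inl = flat c := by rw [hb0]; rfl
  obtain ⟨s, hs⟩ : ∃ s : Finset ℕ, ¬ ∃ x, ∀ i ∈ s, Φ x (b i ∘ Sum.inl) := by
    unfold FamConsistent at hincons
    push Not at hincons
    obtain ⟨s, hs⟩ := hincons
    refine ⟨s, ?_⟩
    rintro ⟨x, hx⟩
    obtain ⟨i, hi, hi'⟩ := hs x
    exact hi' ((hΦb i x).2 (hx i hi))
  by_cases hfin : (M : Set 𝕄).Finite
  · have huniv := eq_univ_of_finite M hfin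
    refine ⟨0, ?_⟩
    rintro n cs ps h1 - - ⟨x, hx⟩
    exfalso
    apply hs
    refine ⟨x, fun i _ => ?_⟩
    have e1 : b i = b 0 := funext fun t => (hbM i).eq_of_mem t (huniv _)
    have e2 : flat (cs 0) = flat c :=
      funext fun t => ((h1 0 (Nat.zero_le _)).eq_of_mem t (huniv _)).symm
    rw [e1, hb0c, ← e2]
    exact hx 0 (Nat.zero_le _)
  have hinf : (M : Set 𝕄).Infinite := hfin
  have hκ : Cardinal.aleph0 < κ :=
    lt_of_le_of_lt (Cardinal.aleph0_le_mk_iff.2 hinf.to_subtype) hMsmall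
  have : Nonempty 𝕄 := ⟨hinf.nonempty.some⟩
  by_contra hbound
  push Not at hbound
  let q : GlobalType L 𝕄 (Fin m × Fin nv) := q₀.pull Sum.inl
  have hq : q.InvariantOver (M : Set 𝕄) := GlobalType.pull_invariant _ hq₀
  have hqb : ∀ i, q.RealizesOver (prev (M : Set 𝕄) (fun i => b i ∘ Sum.inl) i)
      (b i ∘ Sum.inl) := by
    intro i
    refine GlobalType.pull_realizes _ ((hbq i).mono ?_)
    refine prev_subset Set.subset_union_left ?_
    intro j hj t
    exact Or.inr (Set.mem_biUnion (show j ∈ Set.Iio i from hj) ⟨Sum.inl t, rfl⟩)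
  have hqc : q.RealizesOver (M : Set 𝕄) (flat c) := by
    have := (hqb 0).mono (A := (M : Set 𝕄)) Set.subset_union_left
    rwa [hb0c] at this
  have hK : ¬ GoodSeq (M : Set 𝕄) Φ q (flat c) (s.sup id + 1) 0 := by
    rintro ⟨ps, z, -, hps, -, hz, x, hx⟩
    have htp := seq_tpEq ps z (fun i => b i ∘ Sum.inl) (s.sup id + 1)
      (fun i _ => by rw [hps i (Nat.zero_le _)]; exact hq)
      (fun i hi => hz i (by omega))
      (fun i _ => by rw [hps i (Nat.zero_le _)]; exact hqb i)
    have hdef : Dfn L (M : Set 𝕄) (fun y : Fin (s.sup id + 1) × (Fin m × Fin nv) → 𝕄 =>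
        ∃ x : Fin k → 𝕄, ∀ i, Φ x (fun t => y (i, t))) := by
      have h1 : Dfn L (M : Set 𝕄)
          (fun y : (Fin (s.sup id + 1) × (Fin m × Fin nv)) ⊕ Fin k → 𝕄 =>
            ∀ i, Φ (y ∘ Sum.inr) (fun t => y (Sum.inl (i, t)))) :=
        Dfn.all _ fun i => hΦ.relabel (Sum.elim Sum.inr (fun t => Sum.inl (i, t)))
      exact h1.ex
    obtain ⟨x', hx'⟩ := (htp.dfn hdef).1 ⟨x, fun i => hx i (by omega)⟩
    refine hs ⟨x', fun i hi => ?_⟩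
    have hle : i ≤ s.sup id := Finset.le_sup (f := id) hi
    exact hx' ⟨i, by omega⟩
  have h0 : ∀ n, GoodSeq (M : Set 𝕄) Φ q (flat c) 0 n := by
    intro n
    obtain ⟨n', cs, ps, h1, h2, h3, ⟨x, hx⟩, hn⟩ := hbound n
    refine ⟨fun i => if i < n then ps i else q, fun i => flat (cs i), ?_, ?_, ?_, ?_, x, ?_⟩
    · intro i hi
      simp only [if_pos hi]
      exact (h2 i (by omega)).invariant
    · intro i hi
      simp only [if_neg (show ¬ i < n by omega)]
    · intro i hi
      exact h1 i (by omega)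
    · intro i hi
      simp only [if_pos (show i < n by omega)]
      exact h3 i (by omega)
    · intro i hi
      exact hx i (by omega)
  obtain ⟨g, hg⟩ := core hκ (M : Set 𝕄) hMsmall Φ hΦ q hq (flat c) hqc _ hK h0
  exact final_tree hκ (M : Set 𝕄) hMsmall P hP Φ hΦ c hc g hg hco

end NSOP3Paper
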